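/- arXiv:0802.0156 — 2 statements merged into one kernel-verified Lean document; each statement's English description precedes it below -/
import Mathlib

section
/- Let T be an L-theory whose class of models is preserved under unions of chains, i.e. whenever (Mᵢ)_{i<ω} is an increasing chain of models of T, the metric completion of the union ⋃ᵢ Mᵢ is also a model of T. Then T is inductive, i.e. T is axiomatizable by open conditions of the form sup_x̄ inf_ȳ φ(x̄,ȳ) < ε with φ quantifier-free. -/
open scoped Classical

/-! ### A core of continuous first-order logic (countable relational signatures) -/

/-- A countable relational continuous signature: relation symbols indexed by `ℕ`
(with a distinguished metric symbol handled separately in the syntax below),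
each with an arity and a prescribed uniform-continuity modulus. -/
structure CSig where
  arity : ℕ → ℕ
  modulus : ℕ → ℝ → ℝ
  modulus_pos : ∀ i ε, 0 < ε → 0 < modulus i ε

/-- Continuous first-order formulas over `S`, with free variables among `Fin n`.
Connectives: rational constants, pointwise min and max, negation `1 - x`,
truncated plus, truncated minus, `|x - y|`, rescaling by rationals; quantifiers
`inf` and `sup` bind the last variable. -/
inductive CFormula (S : CSig) : ℕ → Type
  | dst : ∀ {n}, Fin n → Fin n → CFormula S n
  | rel : ∀ {n} (i : ℕ), (Fin (S.arity i) → Fin n) → CFormula S n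
  | const : ∀ {n}, ℚ → CFormula S n
  | fmin : ∀ {n}, CFormula S n → CFormula S n → CFormula S n
  | fmax : ∀ {n}, CFormula S n → CFormula S n → CFormula S n
  | neg : ∀ {n}, CFormula S n → CFormula S n
  | addT : ∀ {n}, CFormula S n → CFormula S n → CFormula S n
  | subT : ∀ {n}, CFormula S n → CFormula S n → CFormula S n
  | absd : ∀ {n}, CFormula S n → CFormula S n → CFormula S n
  | scale : ∀ {n}, ℚ → CFormula S n → CFormula S n
  | inf : ∀ {n}, CFormula S (n + 1) → CFormula S n
  | sup : ∀ {n}, CFormula S (n + 1) → CFormula S n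

/-- Sentences: formulas with no free variables. -/
abbrev CSentence (S : CSig) := CFormula S 0

/-- Quantifier-free formulas. -/
inductive IsQF {S : CSig} : ∀ {n}, CFormula S n → Prop
  | dst {n} (a b : Fin n) : IsQF (CFormula.dst a b)
  | rel {n} (i : ℕ) (ts : Fin (S.arity i) → Fin n) : IsQF (CFormula.rel i ts)
  | const {n} (q : ℚ) : IsQF (CFormula.const (n := n) q)
  | fmin {n} {φ ψ : CFormula S n} : IsQF φ → IsQF ψ → IsQF (CFormula.fmin φ ψ)
  | fmax {n} {φ ψ : CFormula S n} : IsQF φ → IsQF ψ → IsQF (CFormula.fmax φ ψ)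
  | neg {n} {φ : CFormula S n} : IsQF φ → IsQF (CFormula.neg φ)
  | addT {n} {φ ψ : CFormula S n} : IsQF φ → IsQF ψ → IsQF (CFormula.addT φ ψ)
  | subT {n} {φ ψ : CFormula S n} : IsQF φ → IsQF ψ → IsQF (CFormula.subT φ ψ)
  | absd {n} {φ ψ : CFormula S n} : IsQF φ → IsQF ψ → IsQF (CFormula.absd φ ψ)
  | scale {n} (q : ℚ) {φ : CFormula S n} : IsQF φ → IsQF (CFormula.scale q φ)

/-- Closure of a class of formulas under (finitely many applications of) `inf`. -/
inductive InfCl {S : CSig} (P : ∀ n, CFormula S n → Prop) : ∀ {n}, CFormula S n → Prop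
  | base {n} {φ : CFormula S n} : P n φ → InfCl P φ
  | step {n} {φ : CFormula S (n + 1)} : InfCl P φ → InfCl P (CFormula.inf φ)

/-- Closure of a class of formulas under (finitely many applications of) `sup`. -/
inductive SupCl {S : CSig} (P : ∀ n, CFormula S n → Prop) : ∀ {n}, CFormula S n → Prop
  | base {n} {φ : CFormula S n} : P n φ → SupCl P φ
  | step {n} {φ : CFormula S (n + 1)} : SupCl P φ → SupCl P (CFormula.sup φ)

/-- The pair (Σₖ, Πₖ) of formula classes: Σ₀ = Π₀ = quantifier-free,
Σ_{k+1} = { inf_x̄ φ : φ ∈ Πₖ }, Π_{k+1} = { sup_x̄ φ : φ ∈ Σₖ }. -/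
def SigmaPi (S : CSig) : ℕ → ((∀ n, CFormula S n → Prop) × (∀ n, CFormula S n → Prop))
  | 0 => (fun _ φ => IsQF φ, fun _ φ => IsQF φ)
  | k + 1 => (fun _ φ => InfCl (SigmaPi S k).2 φ, fun _ φ => SupCl (SigmaPi S k).1 φ)

/-- `φ` is a Σₖ formula. -/
def IsSigmaN (S : CSig) (k : ℕ) {n : ℕ} (φ : CFormula S n) : Prop := (SigmaPi S k).1 n φ

/-- `φ` is a Πₖ formula. -/
def IsPiN (S : CSig) (k : ℕ) {n : ℕ} (φ : CFormula S n) : Prop := (SigmaPi S k).2 n φ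

/-- A continuous `L`-structure: a nonempty complete metric space of diameter `≤ 1`
with `[0,1]`-valued interpretations of all predicate symbols, uniformly continuous
with respect to the prescribed moduli. -/
structure CStructure (S : CSig) where
  Carrier : Type
  metric : MetricSpace Carrier
  nonempty : Nonempty Carrier
  complete : @CompleteSpace Carrier metric.toUniformSpace
  bounded : ∀ x y : Carrier, @dist Carrier metric.toDist x y ≤ 1
  rel : ∀ i, (Fin (S.arity i) → Carrier) → ℝ
  rel_nonneg : ∀ i v, 0 ≤ rel i v
  rel_le_one : ∀ i v, rel i v ≤ 1
  rel_uc : ∀ i (ε : ℝ), 0 < ε → ∀ v w,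
    (∀ j, @dist Carrier metric.toDist (v j) (w j) < S.modulus i ε) → |rel i v - rel i w| ≤ ε

attribute [instance] CStructure.metric CStructure.nonempty CStructure.complete

/-- Clamp a rational constant into `[0,1]`. -/
noncomputable def clampQ (q : ℚ) : ℝ := max 0 (min 1 (q : ℝ))

/-- The value of a formula in a structure under a variable assignment. -/
noncomputable def CStructure.eval {S : CSig} (M : CStructure S) :
    ∀ (n : ℕ), CFormula S n → (Fin n → M.Carrier) → ℝ
  | _, .dst a b, v => dist (v a) (v b)
  | _, .rel i ts, v => M.rel i fun j => v (ts j)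
  | _, .const q, _ => clampQ q
  | n, .fmin φ ψ, v => min (M.eval n φ v) (M.eval n ψ v)
  | n, .fmax φ ψ, v => max (M.eval n φ v) (M.eval n ψ v)
  | n, .neg φ, v => 1 - M.eval n φ v
  | n, .addT φ ψ, v => min 1 (M.eval n φ v + M.eval n ψ v)
  | n, .subT φ ψ, v => max 0 (M.eval n φ v - M.eval n ψ v)
  | n, .absd φ ψ, v => |M.eval n φ v - M.eval n ψ v|
  | n, .scale q φ, v => clampQ q * M.eval n φ v
  | n, .inf φ, v => ⨅ x : M.Carrier, M.eval (n + 1) φ (Fin.snoc v x)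
  | n, .sup φ, v => ⨆ x : M.Carrier, M.eval (n + 1) φ (Fin.snoc v x)

/-- The value of a sentence in a structure. -/
noncomputable def CStructure.sval {S : CSig} (M : CStructure S) (φ : CSentence S) : ℝ :=
  M.eval 0 φ (fun i => i.elim0)

/-- A theory: a set of closed conditions `φ ≤ ε`, coded as pairs `(φ, ε)`. -/
abbrev CTheory (S : CSig) := Set (CSentence S × ℝ)

/-- `M` satisfies the theory `T` (all its closed conditions). -/
def CStructure.SatT {S : CSig} (M : CStructure S) (T : CTheory S) : Prop :=
  ∀ c ∈ T, M.sval c.1 ≤ c.2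

/-- The closed condition `φ ≤ ε` follows from `T`. -/
def Entails {S : CSig} (T : CTheory S) (c : CSentence S × ℝ) : Prop :=
  ∀ M : CStructure S, M.SatT T → M.sval c.1 ≤ c.2

/-- The open condition `φ < ε` follows from `T`. -/
def EntailsOpen {S : CSig} (T : CTheory S) (c : CSentence S × ℝ) : Prop :=
  ∀ M : CStructure S, M.SatT T → M.sval c.1 < c.2

/-- `T` is a theory in the official sense: consistent and closed under entailment. -/
def IsTheory {S : CSig} (T : CTheory S) : Prop :=
  (∃ M : CStructure S, M.SatT T) ∧ ∀ c, Entails T c → c ∈ T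

/-- `T` is universal: axiomatizable by closed conditions `sup_x̄ φ(x̄) = 0` with `φ`
quantifier-free (i.e. by conditions `ψ = 0` for Π₁ sentences `ψ`). -/
def IsUniversalTheory {S : CSig} (T : CTheory S) : Prop :=
  ∃ A : Set (CSentence S), (∀ ψ ∈ A, IsPiN S 1 ψ) ∧
    ∀ M : CStructure S, (M.SatT T ↔ ∀ ψ ∈ A, M.sval ψ = 0)

/-- `T` is inductive: axiomatizable by open conditions `sup_x̄ inf_ȳ φ(x̄,ȳ) < ε` with `φ`
quantifier-free (i.e. by open conditions on Π₂ sentences). -/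
def IsInductiveTheory {S : CSig} (T : CTheory S) : Prop :=
  ∃ A : Set (CSentence S × ℝ), (∀ c ∈ A, IsPiN S 2 c.1 ∧ 0 < c.2) ∧
    ∀ M : CStructure S, (M.SatT T ↔ ∀ c ∈ A, M.sval c.1 < c.2)

/-- An embedding of continuous structures: an isometric map preserving all predicates. -/
structure CEmbedding {S : CSig} (M N : CStructure S) where
  toFun : M.Carrier → N.Carrier
  isometry : ∀ x y, dist (toFun x) (toFun y) = dist x y
  map_rel : ∀ i (v : Fin (S.arity i) → M.Carrier), N.rel i (toFun ∘ v) = M.rel i v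

/-- An embedding is elementary if it preserves the values of all formulas. -/
def CEmbedding.Elementary {S : CSig} {M N : CStructure S} (f : CEmbedding M N) : Prop :=
  ∀ (n : ℕ) (φ : CFormula S n) (v : Fin n → M.Carrier),
    N.eval n φ (f.toFun ∘ v) = M.eval n φ v

/-- `T` is model complete: every embedding between models of `T` is elementary. -/
def IsModelComplete {S : CSig} (T : CTheory S) : Prop :=
  ∀ M N : CStructure S, M.SatT T → N.SatT T → ∀ f : CEmbedding M N, f.Elementary

/-- `M` is an existentially closed model of `T`. -/
def IsEC {S : CSig} (T : CTheory S) (M : CStructure S) : Prop :=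
  M.SatT T ∧ ∀ N : CStructure S, N.SatT T → ∀ f : CEmbedding M N,
    ∀ (n : ℕ) (φ : CFormula S (n + 1)), IsQF φ → ∀ b : Fin n → M.Carrier,
      N.eval n (CFormula.inf φ) (f.toFun ∘ b) = M.eval n (CFormula.inf φ) b

/-- `T'` is the model companion of `T`: the models of `T'` are exactly the
existentially closed models of `T`. -/
def IsModelCompanion {S : CSig} (T T' : CTheory S) : Prop :=
  ∀ M : CStructure S, (M.SatT T' ↔ IsEC T M)

/-- `T'` is ℵ₀-categorical: any two separable models of `T'` are isomorphic. -/
def Aleph0Categorical {S : CSig} (T' : CTheory S) : Prop :=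
  ∀ M N : CStructure S, M.SatT T' → N.SatT T' →
    TopologicalSpace.SeparableSpace M.Carrier → TopologicalSpace.SeparableSpace N.Carrier →
    ∃ f : CEmbedding M N, Function.Surjective f.toFun


/-! ### Basic facts about evaluation -/

namespace ChainPf
open Filter Topology

theorem clampQ_mem (q : ℚ) : 0 ≤ clampQ q ∧ clampQ q ≤ 1 := by
  unfold clampQ
  exact ⟨le_max_left _ _, max_le zero_le_one (min_le_left _ _)⟩

theorem eval_mem {S : CSig} (M : CStructure S) {n : ℕ} (φ : CFormula S n) :
    ∀ v : Fin n → M.Carrier, 0 ≤ M.eval n φ v ∧ M.eval n φ v ≤ 1 := by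
  induction φ with
  | dst a b => intro v; exact ⟨dist_nonneg, M.bounded _ _⟩
  | rel i ts => intro v; exact ⟨M.rel_nonneg _ _, M.rel_le_one _ _⟩
  | const q => intro v; exact clampQ_mem q
  | fmin φ ψ h1 h2 =>
    intro v; simp only [CStructure.eval]
    exact ⟨le_min (h1 v).1 (h2 v).1, (min_le_left _ _).trans (h1 v).2⟩
  | fmax φ ψ h1 h2 =>
    intro v; simp only [CStructure.eval]
    exact ⟨(h1 v).1.trans (le_max_left _ _), max_le (h1 v).2 (h2 v).2⟩
  | neg φ h =>
    intro v; simp only [CStructure.eval]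
    have := h v; constructor <;> linarith
  | addT φ ψ h1 h2 =>
    intro v; simp only [CStructure.eval]
    exact ⟨le_min zero_le_one (add_nonneg (h1 v).1 (h2 v).1), min_le_left _ _⟩
  | subT φ ψ h1 h2 =>
    intro v; simp only [CStructure.eval]
    have a := h1 v; have b := h2 v
    exact ⟨le_max_left _ _, max_le zero_le_one (by linarith)⟩
  | absd φ ψ h1 h2 =>
    intro v; simp only [CStructure.eval]
    have a := h1 v; have b := h2 v
    exact ⟨abs_nonneg _, abs_le.2 ⟨by linarith, by linarith⟩⟩
  | scale q φ h =>
    intro v; simp only [CStructure.eval]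
    have a := h v; have b := clampQ_mem q
    exact ⟨mul_nonneg b.1 a.1, mul_le_one₀ b.2 a.1 a.2⟩
  | inf φ h =>
    intro v; simp only [CStructure.eval]
    obtain ⟨x⟩ := M.nonempty
    exact ⟨le_ciInf fun x => (h _).1,
      (ciInf_le ⟨0, by rintro _ ⟨y, rfl⟩; exact (h _).1⟩ x).trans (h _).2⟩
  | sup φ h =>
    intro v; simp only [CStructure.eval]
    obtain ⟨x⟩ := M.nonempty
    exact ⟨(h (Fin.snoc v x)).1.trans
      (le_ciSup (f := fun x => M.eval _ φ (Fin.snoc v x))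
        ⟨1, by rintro _ ⟨y, rfl⟩; exact (h _).2⟩ x), ciSup_le fun x => (h _).2⟩

theorem eval_inf_le {S : CSig} (M : CStructure S) {n : ℕ} (φ : CFormula S (n + 1))
    (v : Fin n → M.Carrier) (x : M.Carrier) :
    M.eval n (.inf φ) v ≤ M.eval (n + 1) φ (Fin.snoc v x) := by
  simp only [CStructure.eval]
  exact ciInf_le ⟨0, by rintro _ ⟨y, rfl⟩; exact (eval_mem M φ _).1⟩ x

theorem le_eval_inf {S : CSig} (M : CStructure S) {n : ℕ} (φ : CFormula S (n + 1))
    (v : Fin n → M.Carrier) (r : ℝ) (h : ∀ x, r ≤ M.eval (n + 1) φ (Fin.snoc v x)) :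
    r ≤ M.eval n (.inf φ) v := by
  simp only [CStructure.eval]
  exact le_ciInf h

theorem le_eval_sup {S : CSig} (M : CStructure S) {n : ℕ} (φ : CFormula S (n + 1))
    (v : Fin n → M.Carrier) (x : M.Carrier) :
    M.eval (n + 1) φ (Fin.snoc v x) ≤ M.eval n (.sup φ) v := by
  simp only [CStructure.eval]
  exact le_ciSup (f := fun x => M.eval _ φ (Fin.snoc v x))
    ⟨1, by rintro _ ⟨y, rfl⟩; exact (eval_mem M φ _).2⟩ x

theorem eval_sup_le {S : CSig} (M : CStructure S) {n : ℕ} (φ : CFormula S (n + 1))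
    (v : Fin n → M.Carrier) (r : ℝ) (h : ∀ x, M.eval (n + 1) φ (Fin.snoc v x) ≤ r) :
    M.eval n (.sup φ) v ≤ r := by
  simp only [CStructure.eval]
  exact ciSup_le h

theorem eval_neg {S : CSig} (M : CStructure S) {n : ℕ} (φ : CFormula S n)
    (v : Fin n → M.Carrier) : M.eval n (.neg φ) v = 1 - M.eval n φ v := by
  simp only [CStructure.eval]

theorem eval_sup_eq {S : CSig} (M : CStructure S) {n : ℕ} (φ : CFormula S (n + 1))
    (v : Fin n → M.Carrier) :
    M.eval n (.sup φ) v = 1 - M.eval n (.inf (.neg φ)) v := by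
  apply le_antisymm
  · apply eval_sup_le
    intro x
    have := eval_inf_le M (.neg φ) v x
    rw [eval_neg] at this
    linarith
  · have : 1 - M.eval n (.sup φ) v ≤ M.eval n (.inf (.neg φ)) v := by
      apply le_eval_inf
      intro x
      have := le_eval_sup M φ v x
      rw [eval_neg]
      linarith
    linarith

theorem dist_snoc_le {X : Type} [MetricSpace X] {n : ℕ} (v w : Fin n → X) (x : X) :
    dist (Fin.snoc v x : Fin (n + 1) → X) (Fin.snoc w x) ≤ dist v w := by
  rw [dist_pi_le_iff dist_nonneg]
  intro j
  refine Fin.lastCases ?_ (fun j => ?_) j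
  · simp
  · simpa using dist_le_pi_dist v w j

theorem eval_uc {S : CSig} (M : CStructure S) {n : ℕ} (φ : CFormula S n) :
    UniformContinuous (fun v : Fin n → M.Carrier => M.eval n φ v) := by
  have infcase : ∀ {n : ℕ} (φ : CFormula S (n + 1)),
      UniformContinuous (fun v : Fin (n + 1) → M.Carrier => M.eval (n + 1) φ v) →
      UniformContinuous (fun v : Fin n → M.Carrier => M.eval n (.inf φ) v) := by
    intro n φ h
    rw [Metric.uniformContinuous_iff] at h ⊢
    intro ε hε
    obtain ⟨δ, hδ, hh⟩ := h (ε / 2) (half_pos hε)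
    refine ⟨δ, hδ, ?_⟩
    have key : ∀ v w : Fin n → M.Carrier, dist v w < δ →
        M.eval n (.inf φ) v - ε / 2 ≤ M.eval n (.inf φ) w := by
      intro v w hvw
      apply le_eval_inf
      intro x
      have h1 := eval_inf_le M φ v x
      have h2 := hh ((dist_snoc_le v w x).trans_lt hvw)
      rw [Real.dist_eq, abs_lt] at h2
      linarith [h2.2]
    intro v w hvw
    have a := key v w hvw
    have b := key w v (by rwa [dist_comm])
    rw [Real.dist_eq, abs_lt]
    constructor <;> linarith
  have negcase : ∀ {n : ℕ} (φ : CFormula S n),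
      UniformContinuous (fun v : Fin n → M.Carrier => M.eval n φ v) →
      UniformContinuous (fun v : Fin n → M.Carrier => M.eval n (.neg φ) v) := by
    intro n φ h
    simp only [CStructure.eval]
    exact uniformContinuous_const.sub h
  have Lmin : LipschitzWith 1 (fun p : ℝ × ℝ => min p.1 p.2) := by
    apply LipschitzWith.of_dist_le_mul
    intro p q
    have := abs_min_sub_min_le_max p.1 p.2 q.1 q.2
    simpa [Real.dist_eq, Prod.dist_eq] using this
  have Lmax : LipschitzWith 1 (fun p : ℝ × ℝ => max p.1 p.2) := by
    apply LipschitzWith.of_dist_le_mul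
    intro p q
    have := abs_max_sub_max_le_max p.1 p.2 q.1 q.2
    simpa [Real.dist_eq, Prod.dist_eq] using this
  induction φ with
  | dst a b =>
    simp only [CStructure.eval]
    exact (Pi.uniformContinuous_proj _ a).dist (Pi.uniformContinuous_proj _ b)
  | rel i ts =>
    simp only [CStructure.eval]
    rw [Metric.uniformContinuous_iff]
    intro ε hε
    refine ⟨S.modulus i (ε / 2), S.modulus_pos _ _ (half_pos hε), ?_⟩
    intro v w hvw
    rw [Real.dist_eq]
    refine (M.rel_uc i (ε / 2) (half_pos hε) _ _ ?_).trans_lt (half_lt_self hε)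
    intro j
    exact (dist_le_pi_dist v w _).trans_lt hvw
  | const q => simp only [CStructure.eval]; exact uniformContinuous_const
  | fmin φ ψ h1 h2 =>
    simp only [CStructure.eval]
    exact Lmin.uniformContinuous.comp (h1.prodMk h2)
  | fmax φ ψ h1 h2 =>
    simp only [CStructure.eval]
    exact Lmax.uniformContinuous.comp (h1.prodMk h2)
  | neg φ h => exact negcase φ h
  | addT φ ψ h1 h2 =>
    simp only [CStructure.eval]
    exact Lmin.uniformContinuous.comp (uniformContinuous_const.prodMk (h1.add h2))
  | subT φ ψ h1 h2 =>
    simp only [CStructure.eval]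
    exact Lmax.uniformContinuous.comp (uniformContinuous_const.prodMk (h1.sub h2))
  | absd φ ψ h1 h2 =>
    simp only [CStructure.eval, ← Real.dist_eq]
    exact h1.dist h2
  | scale q φ h =>
    simp only [CStructure.eval]
    exact h.const_mul' _
  | inf φ h => exact infcase φ h
  | sup φ h =>
    simp only [eval_sup_eq]
    exact uniformContinuous_const.sub (infcase _ (negcase _ h))

theorem eval_cont {S : CSig} (M : CStructure S) {n : ℕ} (φ : CFormula S n) :
    Continuous (fun v : Fin n → M.Carrier => M.eval n φ v) := (eval_uc M φ).continuous

/-! ### Ultralimit structures -/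

theorem exists_ulim {I : Type} (U : Ultrafilter I) (f : I → ℝ)
    (h : ∀ i, 0 ≤ f i ∧ f i ≤ 1) : ∃ L, Tendsto f U (𝓝 L) := by
  obtain ⟨L, -, hL⟩ := (isCompact_Icc (a := (0:ℝ)) (b := 1)).ultrafilter_le_nhds (U.map f)
    (by
      rw [le_principal_iff]
      exact Filter.mem_map.2 (Filter.Eventually.of_forall fun i => ⟨(h i).1, (h i).2⟩))
  exact ⟨L, hL⟩

/-- Completion of a prestructure. -/
theorem exists_completion {S : CSig} (X : Type) [PseudoMetricSpace X] [Nonempty X]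
    (hb : ∀ x y : X, dist x y ≤ 1)
    (R : ∀ i, (Fin (S.arity i) → X) → ℝ)
    (R01 : ∀ i v, 0 ≤ R i v ∧ R i v ≤ 1)
    (Ruc : ∀ i (ε : ℝ), 0 < ε → ∀ v w,
      (∀ j, dist (v j) (w j) < S.modulus i ε) → |R i v - R i w| ≤ ε) :
    ∃ (C : CStructure S) (ι : X → C.Carrier), DenseRange ι ∧
      (∀ x y, dist (ι x) (ι y) = dist x y) ∧ (∀ i v, C.rel i (ι ∘ v) = R i v) := by
  let c : X → UniformSpace.Completion X := fun x => (x : UniformSpace.Completion X)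
  have hc : Isometry c := UniformSpace.Completion.coe_isometry
  have hd : DenseRange c := UniformSpace.Completion.denseRange_coe
  have ex : ∀ i, ∃ F : (Fin (S.arity i) → UniformSpace.Completion X) → ℝ,
      Continuous F ∧ ∀ v, F (c ∘ v) = R i v := by
    intro i
    let p : (Fin (S.arity i) → X) → (Fin (S.arity i) → UniformSpace.Completion X) := fun v => c ∘ v
    have hp : IsUniformInducing p := by
      have : Isometry p := by
        apply Isometry.of_dist_eq
        intro v w
        simp only [dist_pi_def, p]
        congr 2
        funext j
        exact Subtype.ext (hc.dist_eq _ _)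
      exact this.isUniformInducing
    have hpd : DenseRange p := DenseRange.piMap (fun _ => hd)
    have hR : UniformContinuous (R i) := by
      rw [Metric.uniformContinuous_iff]
      intro ε hε
      refine ⟨S.modulus i (ε / 2), S.modulus_pos _ _ (half_pos hε), ?_⟩
      intro v w hvw
      rw [Real.dist_eq]
      refine (Ruc i (ε / 2) (half_pos hε) _ _ ?_).trans_lt (half_lt_self hε)
      intro j
      exact (dist_le_pi_dist v w _).trans_lt hvw
    refine ⟨(hp.isDenseInducing hpd).extend (R i),
      (uniformContinuous_uniformly_extend hp hpd hR).continuous, ?_⟩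
    intro v
    exact (hp.isDenseInducing hpd).extend_eq hR.continuous v
  choose F hF hFR using ex
  have hdp : ∀ i, DenseRange (fun v : Fin (S.arity i) → X => c ∘ v) :=
    fun i => DenseRange.piMap (fun _ => hd)
  refine ⟨{ Carrier := UniformSpace.Completion X
            metric := inferInstance
            nonempty := ‹Nonempty X›.map c
            complete := inferInstance
            bounded := ?_
            rel := F
            rel_nonneg := ?_
            rel_le_one := ?_
            rel_uc := ?_ }, c, hd, hc.dist_eq, hFR⟩
  · intro x y
    refine UniformSpace.Completion.induction_on₂ x y
      (isClosed_le (by fun_prop) continuous_const) ?_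
    intro a b
    rw [UniformSpace.Completion.dist_eq]
    exact hb a b
  · intro i v
    refine (hdp i).induction_on v (isClosed_le continuous_const (hF i)) ?_
    intro a
    rw [hFR]; exact (R01 i a).1
  · intro i v
    refine (hdp i).induction_on v (isClosed_le (hF i) continuous_const) ?_
    intro a
    rw [hFR]; exact (R01 i a).2
  · intro i ε hε v w hvw
    by_contra hcon
    rw [not_le] at hcon
    let O : Set ((Fin (S.arity i) → UniformSpace.Completion X) ×
        (Fin (S.arity i) → UniformSpace.Completion X)) :=
      {p | ε < |F i p.1 - F i p.2|} ∩ ⋂ j, {p | dist (p.1 j) (p.2 j) < S.modulus i ε}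
    have hO : IsOpen O := by
      refine IsOpen.inter ?_ (isOpen_iInter_of_finite fun j => ?_)
      · exact isOpen_lt continuous_const
          (((hF i).comp continuous_fst).sub ((hF i).comp continuous_snd)).abs
      · exact isOpen_lt (by fun_prop) continuous_const
    obtain ⟨⟨a, b⟩, hab⟩ := ((hdp i).prodMap (hdp i)).exists_mem_open hO
      ⟨(v, w), hcon, Set.mem_iInter.2 hvw⟩
    obtain ⟨h1, h2⟩ := hab
    rw [Set.mem_iInter] at h2
    simp only [Set.mem_ofPred_eq, Prod.map, hFR] at h1
    refine absurd (Ruc i ε hε a b fun j => ?_) (not_le.2 h1)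
    have := h2 j
    simp only [Set.mem_ofPred_eq, Prod.map, Function.comp] at this
    rwa [hc.dist_eq] at this

/-- Ultralimits along an arbitrary family of threads. -/
theorem exists_limit {S : CSig} {I : Type} (U : Ultrafilter I) (M : I → CStructure S)
    (X : Type) [Nonempty X] (e : X → ∀ i, (M i).Carrier) :
    ∃ (C : CStructure S) (ι : X → C.Carrier), DenseRange ι ∧
      (∀ x y, Tendsto (fun i => dist (e x i) (e y i)) U (𝓝 (dist (ι x) (ι y)))) ∧
      (∀ r (v : Fin (S.arity r) → X),
        Tendsto (fun i => (M i).rel r (fun j => e (v j) i)) U (𝓝 (C.rel r (ι ∘ v)))) := by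
  have e1 : ∀ x y, ∃ L, Tendsto (fun i => dist (e x i) (e y i)) U (𝓝 L) := fun x y =>
    exists_ulim U _ fun i => ⟨dist_nonneg, (M i).bounded _ _⟩
  have e2 : ∀ r (v : Fin (S.arity r) → X), ∃ L,
      Tendsto (fun i => (M i).rel r (fun j => e (v j) i)) U (𝓝 L) := fun r v =>
    exists_ulim U _ fun i => ⟨(M i).rel_nonneg _ _, (M i).rel_le_one _ _⟩
  choose D hD using e1
  choose R hR using e2
  let _ : PseudoMetricSpace X :=
    { dist := D
      dist_self := fun x => tendsto_nhds_unique (hD x x) (by simp)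
      dist_comm := fun x y => tendsto_nhds_unique (hD x y)
        (by simpa only [dist_comm] using hD y x)
      dist_triangle := fun x y z => le_of_tendsto_of_tendsto' (hD x z) ((hD x y).add (hD y z))
        fun i => dist_triangle _ _ _ }
  obtain ⟨C, ι, h1, h2, h3⟩ := exists_completion (S := S) X
    (fun x y => le_of_tendsto' (hD x y) fun i => (M i).bounded _ _) R
    (fun r v => ⟨ge_of_tendsto' (hR r v) fun i => (M i).rel_nonneg _ _,
      le_of_tendsto' (hR r v) fun i => (M i).rel_le_one _ _⟩)
    (by
      intro r ε hε v w hvw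
      refine le_of_tendsto ((hR r v).sub (hR r w)).abs ?_
      have : ∀ j, ∀ᶠ i in (U : Filter I), dist (e (v j) i) (e (w j) i) < S.modulus r ε :=
        fun j => (hD (v j) (w j)).eventually_lt_const (hvw j)
      filter_upwards [eventually_all.2 this] with i hi
      exact (M i).rel_uc r ε hε _ _ hi)
  refine ⟨C, ι, h1, fun x y => ?_, fun r v => ?_⟩
  · rw [h2]; exact hD x y
  · rw [h3]; exact hR r v

theorem los {S : CSig} {I : Type} (U : Ultrafilter I) (M : I → CStructure S)
    (X : Type) (e : X → ∀ i, (M i).Carrier)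
    (C : CStructure S) (ι : X → C.Carrier) (hd : DenseRange ι)
    (hD : ∀ x y, Tendsto (fun i => dist (e x i) (e y i)) U (𝓝 (dist (ι x) (ι y))))
    (hR : ∀ r (v : Fin (S.arity r) → X),
        Tendsto (fun i => (M i).rel r (fun j => e (v j) i)) U (𝓝 (C.rel r (ι ∘ v))))
    (H : ∀ (n : ℕ) (φ : CFormula S (n + 1)) (v : Fin n → X) (ε : ℝ), 0 < ε →
      ∃ x : X, ∀ᶠ i in (U : Filter I),
        (M i).eval (n + 1) φ (Fin.snoc (fun j => e (v j) i) (e x i)) ≤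
          (M i).eval n (.inf φ) (fun j => e (v j) i) + ε)
    {n : ℕ} (φ : CFormula S n) : ∀ (v : Fin n → X),
    Tendsto (fun i => (M i).eval n φ (fun j => e (v j) i)) U (𝓝 (C.eval n φ (ι ∘ v))) := by
  have negcase : ∀ {n : ℕ} (φ : CFormula S n),
      (∀ (v : Fin n → X),
        Tendsto (fun i => (M i).eval n φ (fun j => e (v j) i)) U (𝓝 (C.eval n φ (ι ∘ v)))) →
      (∀ (v : Fin n → X), Tendsto (fun i => (M i).eval n (.neg φ) (fun j => e (v j) i)) U
        (𝓝 (C.eval n (.neg φ) (ι ∘ v)))) := by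
    intro n φ h v
    simp only [CStructure.eval]
    exact tendsto_const_nhds.sub (h v)
  have infcase : ∀ {n : ℕ} (φ : CFormula S (n + 1)),
      (∀ (v : Fin (n + 1) → X), Tendsto (fun i => (M i).eval (n + 1) φ (fun j => e (v j) i)) U
        (𝓝 (C.eval (n + 1) φ (ι ∘ v)))) →
      (∀ (v : Fin n → X), Tendsto (fun i => (M i).eval n (.inf φ) (fun j => e (v j) i)) U
        (𝓝 (C.eval n (.inf φ) (ι ∘ v)))) := by
    intro n φ h v
    obtain ⟨L, hL⟩ := exists_ulim U (fun i => (M i).eval n (.inf φ) (fun j => e (v j) i))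
      (fun i => eval_mem _ _ _)
    have hx : ∀ x, Tendsto (fun i => (M i).eval (n + 1) φ
        (Fin.snoc (fun j => e (v j) i) (e x i))) U
        (𝓝 (C.eval (n + 1) φ (Fin.snoc (ι ∘ v) (ι x)))) := by
      intro x
      have := h (Fin.snoc v x)
      rw [Fin.comp_snoc] at this
      convert this using 3 with i
      funext j
      refine Fin.lastCases ?_ (fun j => ?_) j <;> simp
    suffices L = C.eval n (.inf φ) (ι ∘ v) by rwa [← this]
    apply le_antisymm
    · apply le_eval_inf
      intro x
      refine hd.induction_on x (isClosed_le continuous_const ?_) ?_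
      · refine (eval_cont C φ).comp (continuous_pi fun j => ?_)
        refine Fin.lastCases ?_ (fun j => ?_) j
        · simpa using continuous_id'
        · simpa using continuous_const
      · intro a
        exact le_of_tendsto_of_tendsto' hL (hx a) fun i => eval_inf_le _ _ _ _
    · apply le_of_forall_pos_le_add
      intro ε hε
      obtain ⟨x, hxe⟩ := H n φ v ε hε
      refine (eval_inf_le C φ _ (ι x)).trans ?_
      exact le_of_tendsto_of_tendsto (hx x) (hL.add_const ε) hxe
  induction φ with
  | dst a b => intro v; simp only [CStructure.eval]; exact hD _ _
  | rel i ts =>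
    intro v; simp only [CStructure.eval]
    exact hR i (fun j => v (ts j))
  | const q => intro v; simp only [CStructure.eval]; exact tendsto_const_nhds
  | fmin φ ψ h1 h2 => intro v; simp only [CStructure.eval]; exact (h1 v).min (h2 v)
  | fmax φ ψ h1 h2 => intro v; simp only [CStructure.eval]; exact (h1 v).max (h2 v)
  | neg φ h => exact negcase φ h
  | addT φ ψ h1 h2 =>
    intro v; simp only [CStructure.eval]
    exact tendsto_const_nhds.min ((h1 v).add (h2 v))
  | subT φ ψ h1 h2 =>
    intro v; simp only [CStructure.eval]
    exact tendsto_const_nhds.max ((h1 v).sub (h2 v))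
  | absd φ ψ h1 h2 =>
    intro v; simp only [CStructure.eval]
    exact ((h1 v).sub (h2 v)).abs
  | scale q φ h =>
    intro v; simp only [CStructure.eval]
    exact (h v).const_mul _
  | inf φ h => exact infcase φ h
  | sup φ h =>
    intro v; simp only [eval_sup_eq]
    exact tendsto_const_nhds.sub (infcase _ (negcase _ h) v)

/-! ### Quantifier-free formulas with variables in an arbitrary type -/

theorem qf_rename {S : CSig} {n : ℕ} {φ : CFormula S n} (h : IsQF φ) :
    ∀ {m : ℕ} (s : Fin n → Fin m), ∃ φ' : CFormula S m, IsQF φ' ∧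
      ∀ (M : CStructure S) (v : Fin m → M.Carrier), M.eval m φ' v = M.eval n φ (v ∘ s) := by
  induction h with
  | dst a b => intro m s; exact ⟨_, .dst (s a) (s b), fun M v => by simp [CStructure.eval]⟩
  | rel i ts => intro m s; exact ⟨_, .rel i (s ∘ ts), fun M v => by simp [CStructure.eval]⟩
  | const q => intro m s; exact ⟨_, .const q, fun M v => by simp [CStructure.eval]⟩
  | fmin _ _ h1 h2 =>
    intro m s
    obtain ⟨a, ha, ha'⟩ := h1 s
    obtain ⟨b, hb, hb'⟩ := h2 s
    exact ⟨_, .fmin ha hb, fun M v => by simp [CStructure.eval, ha', hb']⟩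
  | fmax _ _ h1 h2 =>
    intro m s
    obtain ⟨a, ha, ha'⟩ := h1 s
    obtain ⟨b, hb, hb'⟩ := h2 s
    exact ⟨_, .fmax ha hb, fun M v => by simp [CStructure.eval, ha', hb']⟩
  | neg _ h1 =>
    intro m s
    obtain ⟨a, ha, ha'⟩ := h1 s
    exact ⟨_, .neg ha, fun M v => by simp [CStructure.eval, ha']⟩
  | addT _ _ h1 h2 =>
    intro m s
    obtain ⟨a, ha, ha'⟩ := h1 s
    obtain ⟨b, hb, hb'⟩ := h2 s
    exact ⟨_, .addT ha hb, fun M v => by simp [CStructure.eval, ha', hb']⟩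
  | subT _ _ h1 h2 =>
    intro m s
    obtain ⟨a, ha, ha'⟩ := h1 s
    obtain ⟨b, hb, hb'⟩ := h2 s
    exact ⟨_, .subT ha hb, fun M v => by simp [CStructure.eval, ha', hb']⟩
  | absd _ _ h1 h2 =>
    intro m s
    obtain ⟨a, ha, ha'⟩ := h1 s
    obtain ⟨b, hb, hb'⟩ := h2 s
    exact ⟨_, .absd ha hb, fun M v => by simp [CStructure.eval, ha', hb']⟩
  | scale q _ h1 =>
    intro m s
    obtain ⟨a, ha, ha'⟩ := h1 s
    exact ⟨_, .scale q ha, fun M v => by simp [CStructure.eval, ha']⟩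

/-- A quantifier-free formula with variables in `α`. -/
structure AF (S : CSig) (α : Type) : Type where
  n : ℕ
  φ : CFormula S n
  qf : IsQF φ
  s : Fin n → α

/-- Its value. -/
noncomputable def AF.val {S : CSig} {α : Type} (ψ : AF S α) (M : CStructure S)
    (v : α → M.Carrier) : ℝ := M.eval ψ.n ψ.φ (v ∘ ψ.s)

theorem AF.val_mem {S : CSig} {α : Type} (ψ : AF S α) (M : CStructure S)
    (v : α → M.Carrier) : 0 ≤ ψ.val M v ∧ ψ.val M v ≤ 1 := eval_mem _ _ _

theorem AF.exists_max {S : CSig} {α : Type} (ψ χ : AF S α) :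
    ∃ θ : AF S α, ∀ M v, θ.val M v = max (ψ.val M v) (χ.val M v) := by
  obtain ⟨a, ha, ha'⟩ := qf_rename ψ.qf (Fin.castAdd χ.n)
  obtain ⟨b, hb, hb'⟩ := qf_rename χ.qf (Fin.natAdd ψ.n)
  refine ⟨⟨ψ.n + χ.n, .fmax a b, .fmax ha hb, Fin.append ψ.s χ.s⟩, fun M v => ?_⟩
  simp only [AF.val, CStructure.eval, ha', hb']
  congr 2 <;> (funext j; simp)

theorem AF.exists_neg {S : CSig} {α : Type} (ψ : AF S α) :
    ∃ θ : AF S α, ∀ M v, θ.val M v = 1 - ψ.val M v :=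
  ⟨⟨ψ.n, .neg ψ.φ, .neg ψ.qf, ψ.s⟩, fun M v => by simp [AF.val, CStructure.eval]⟩

theorem AF.exists_sub {S : CSig} {α : Type} (ψ : AF S α) (q : ℚ) :
    ∃ θ : AF S α, ∀ M v, θ.val M v = max 0 (ψ.val M v - clampQ q) :=
  ⟨⟨ψ.n, .subT ψ.φ (.const q), .subT ψ.qf (.const q), ψ.s⟩, fun M v => by
    simp [AF.val, CStructure.eval]⟩

/-- A map preserving quantifier-free formulas is an embedding. -/
def embOfQF {S : CSig} {P Q : CStructure S} (E : P.Carrier → Q.Carrier)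
    (h : ∀ (n : ℕ) (φ : CFormula S n), IsQF φ → ∀ v : Fin n → P.Carrier,
      Q.eval n φ (E ∘ v) = P.eval n φ v) : CEmbedding P Q where
  toFun := E
  isometry x y := by
    have := h 2 (.dst 0 1) (.dst 0 1) ![x, y]
    simpa [CStructure.eval] using this
  map_rel i v := by
    have := h _ (.rel i id) (.rel i id) v
    simp only [CStructure.eval, id] at this
    exact this

theorem exists_inf_approx {S : CSig} (M : CStructure S) {n : ℕ} (φ : CFormula S (n + 1))
    (v : Fin n → M.Carrier) (ε : ℝ) (hε : 0 < ε) :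
    ∃ x, M.eval (n + 1) φ (Fin.snoc v x) ≤ M.eval n (.inf φ) v + ε := by
  by_contra hcon
  push Not at hcon
  have := le_eval_inf M φ v _ fun x => (hcon x).le
  linarith

/-! ### Compactness -/

theorem compact {S : CSig} (P : CStructure S) (B : Type)
    (K : ∀ Q : CStructure S, (P.Carrier → Q.Carrier) → Prop)
    (hK : ∀ ψ : AF S (P.Carrier ⊕ B), (∀ b : B → P.Carrier, ψ.val P (Sum.elim id b) = 0) →
      ∀ ε : ℝ, 0 < ε → ∃ (Q : CStructure S) (e : P.Carrier → Q.Carrier), K Q e ∧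
        ∀ b : B → Q.Carrier, ψ.val Q (Sum.elim e b) ≤ ε) :
    ∃ (Q : CStructure S) (E : CEmbedding P Q),
      (∀ (χ : AF S (P.Carrier ⊕ B)) (r : ℝ),
        (∀ b : B → P.Carrier, χ.val P (Sum.elim id b) ≤ r) →
        ∀ b : B → Q.Carrier, χ.val Q (Sum.elim E.toFun b) ≤ r) ∧
      (∀ (n : ℕ) (φ : CFormula S n) (v : Fin n → P.Carrier) (r : ℝ),
        (∀ Q' e, K Q' e → Q'.eval n φ (e ∘ v) ≤ r) → Q.eval n φ (E.toFun ∘ v) ≤ r) := by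
  let Z : Type := {ψ : AF S (P.Carrier ⊕ B) // ∀ b : B → P.Carrier, ψ.val P (Sum.elim id b) = 0}
  obtain ⟨p0⟩ := P.nonempty

  have hfin : ∀ F : Finset Z, ∃ θ : Z, ∀ ψ ∈ F, ∀ M v, ψ.1.val M v ≤ θ.1.val M v := by
    intro F
    induction F using Finset.induction_on with
    | empty =>
      refine ⟨⟨⟨0, .const 0, .const 0, fun i => i.elim0⟩, fun b => ?_⟩, by simp⟩
      simp [AF.val, CStructure.eval, clampQ]
    | insert a F ha ih =>
      obtain ⟨θ, hθ⟩ := ih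
      obtain ⟨τ, hτ⟩ := AF.exists_max a.1 θ.1
      refine ⟨⟨τ, fun b => by rw [hτ, a.2, θ.2, max_self]⟩, ?_⟩
      intro ψ hψ M v
      show _ ≤ τ.val M v
      rw [hτ]
      rcases Finset.mem_insert.1 hψ with rfl | h
      · exact le_max_left _ _
      · exact (hθ ψ h M v).trans (le_max_right _ _)
  have hex : ∀ i : Finset Z × ℕ, ∃ (Q : CStructure S) (e : P.Carrier → Q.Carrier), K Q e ∧
      ∀ ψ ∈ i.1, ∀ b : B → Q.Carrier, ψ.1.val Q (Sum.elim e b) ≤ 1 / ((i.2 : ℝ) + 1) := by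
    intro i
    obtain ⟨θ, hθ⟩ := hfin i.1
    obtain ⟨Q, e, h1, h2⟩ := hK θ.1 θ.2 (1 / ((i.2 : ℝ) + 1)) (by positivity)
    exact ⟨Q, e, h1, fun ψ hψ b => (hθ ψ hψ Q _).trans (h2 b)⟩
  choose Q e hQ hψ using hex
  let U : Ultrafilter (Finset Z × ℕ) := Ultrafilter.of atTop
  have hU : (U : Filter (Finset Z × ℕ)) ≤ atTop := Ultrafilter.of_le atTop
  have : Nonempty (∀ i, (Q i).Carrier) := ⟨fun i => e i p0⟩
  obtain ⟨C, ι, hd, hD, hR⟩ := exists_limit U Q (∀ i, (Q i).Carrier) (fun x i => x i)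
  have L := fun {n : ℕ} (φ : CFormula S n) => los U Q (∀ i, (Q i).Carrier) (fun x i => x i)
    C ι hd hD hR (by
      intro n φ v ε hε
      choose x hx using fun i => exists_inf_approx (Q i) φ (fun j => v j i) ε hε
      exact ⟨x, Eventually.of_forall hx⟩) φ
  let E : P.Carrier → C.Carrier := fun x => ι (fun i => e i x)
  have key0 : ∀ (χ : AF S (P.Carrier ⊕ B)), (∀ b : B → P.Carrier, χ.val P (Sum.elim id b) = 0) →
      ∀ b : B → C.Carrier, χ.val C (Sum.elim E b) ≤ 0 := by
    intro χ hχ b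
    have hdB : DenseRange (fun β : B → (∀ i, (Q i).Carrier) => ι ∘ β) :=
      DenseRange.piMap (fun _ => hd)
    refine hdB.induction_on (p := fun b => χ.val C (Sum.elim E b) ≤ 0) b
      (isClosed_le ?_ continuous_const) ?_
    · refine (eval_cont C χ.φ).comp (continuous_pi fun j => ?_)
      simp only [Function.comp]
      rcases χ.s j with x | y
      · simpa using continuous_const
      · simpa using continuous_apply y
    · intro β
      have l1 := L χ.φ (Sum.elim (fun x i => e i x) β ∘ χ.s)
      have e1 : ι ∘ (Sum.elim (fun x i => e i x) β ∘ χ.s) = Sum.elim E (ι ∘ β) ∘ χ.s := by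
        funext j
        simp only [Function.comp]
        rcases χ.s j with x | y <;> simp [E]
      rw [e1] at l1
      have l2 : Tendsto (fun i : Finset Z × ℕ => 1 / ((i.2 : ℝ) + 1)) U (𝓝 0) := by
        refine Tendsto.mono_left ?_ hU
        rw [← prod_atTop_atTop_eq]
        exact tendsto_one_div_add_atTop_nhds_zero_nat.comp tendsto_snd
      refine le_of_tendsto_of_tendsto l1 l2 ?_
      have ev : ∀ᶠ i in (U : Filter (Finset Z × ℕ)), (({⟨χ, hχ⟩} : Finset Z), 0) ≤ i :=
        hU (eventually_ge_atTop _)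
      filter_upwards [ev] with i hi
      have h3 := hψ i ⟨χ, hχ⟩ (hi.1 (Finset.mem_singleton_self _)) (fun y => β y i)
      refine le_trans (le_of_eq ?_) h3
      simp only [AF.val]
      congr 1
      funext j
      simp only [Function.comp]
      rcases χ.s j with x | y <;> simp
  have key : ∀ (χ : AF S (P.Carrier ⊕ B)) (r : ℝ),
        (∀ b : B → P.Carrier, χ.val P (Sum.elim id b) ≤ r) →
        ∀ b : B → C.Carrier, χ.val C (Sum.elim E b) ≤ r := by
    intro χ r hr b
    by_cases h1 : 1 ≤ r
    · exact (χ.val_mem _ _).2.trans h1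
    push Not at h1
    have h0 : 0 ≤ r := (χ.val_mem _ _).1.trans (hr fun _ => p0)
    apply le_of_forall_pos_le_add
    intro ε hε
    obtain ⟨q, hq1, hq2⟩ := exists_rat_btwn (show r < min 1 (r + ε) from lt_min h1 (by linarith))
    have hq3 := lt_min_iff.1 hq2
    have hcl : clampQ q = q := by
      unfold clampQ
      rw [min_eq_right hq3.1.le, max_eq_right (by linarith)]
    obtain ⟨θ, hθ⟩ := χ.exists_sub q
    have := key0 θ (fun b => by
      rw [hθ, hcl]
      exact max_eq_left (by linarith [hr b])) b
    rw [hθ, hcl] at this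
    have h4 := (le_max_right _ _).trans this
    linarith
  have hE : ∀ (n : ℕ) (φ : CFormula S n), IsQF φ → ∀ v : Fin n → P.Carrier,
      C.eval n φ (E ∘ v) = P.eval n φ v := by
    intro n φ hφ v
    let χ : AF S (P.Carrier ⊕ B) := ⟨n, φ, hφ, Sum.inl ∘ v⟩
    obtain ⟨θ, hθ⟩ := χ.exists_neg
    have vP : ∀ b, χ.val P (Sum.elim id b) = P.eval n φ v := fun b => rfl
    have vC : ∀ b, χ.val C (Sum.elim E b) = C.eval n φ (E ∘ v) := fun b => rfl
    have a1 := key χ (P.eval n φ v) (fun b => (vP b).le) (fun _ => E p0)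
    have a2 := key θ (1 - P.eval n φ v) (fun b => by rw [hθ, vP]) (fun _ => E p0)
    rw [hθ, vC] at a2
    rw [vC] at a1
    linarith
  refine ⟨C, embOfQF E hE, key, ?_⟩
  intro n φ v r h
  exact le_of_tendsto' (L φ (fun j i => e i (v j))) fun i => h (Q i) (e i) (hQ i)

theorem code {α : Type} [Nonempty α] {n : ℕ} (s : Fin n → α) :
    ∃ (N : ℕ) (c : α → Fin N) (d : Fin N → α), ∀ j, d (c (s j)) = s j := by
  obtain ⟨a⟩ := ‹Nonempty α›
  refine ⟨n + 1, fun z => if h : ∃ j, s j = z then h.choose.castSucc else Fin.last n,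
    Fin.snoc s a, fun j => ?_⟩
  have h : ∃ k, s k = s j := ⟨j, rfl⟩
  simp only [h, dite_true, Fin.snoc_castSucc]
  exact h.choose_spec

/-! ### Blocks of quantifiers -/

/-- Block of `inf`. -/
def infs {S : CSig} {n : ℕ} : ∀ m : ℕ, CFormula S (n + m) → CFormula S n
  | 0, φ => φ
  | m + 1, φ => infs m (.inf φ)

/-- Block of `sup`. -/
def sups {S : CSig} : ∀ n : ℕ, CFormula S n → CFormula S 0
  | 0, φ => φ
  | n + 1, φ => sups n (.sup φ)

theorem infs_cl {S : CSig} {n : ℕ} (Pr : ∀ n, CFormula S n → Prop) (m : ℕ)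
    (φ : CFormula S (n + m)) (h : InfCl Pr φ) : InfCl Pr (infs m φ) := by
  induction m with
  | zero => exact h
  | succ m ih => exact ih _ (.step h)

theorem sups_cl {S : CSig} (Pr : ∀ n, CFormula S n → Prop) (n : ℕ)
    (φ : CFormula S n) (h : SupCl Pr φ) : SupCl Pr (sups n φ) := by
  induction n with
  | zero => exact h
  | succ m ih => exact ih _ (.step h)

theorem infs_le {S : CSig} (M : CStructure S) {n : ℕ} (m : ℕ) (φ : CFormula S (n + m))
    (v : Fin n → M.Carrier) (w : Fin m → M.Carrier) :
    M.eval n (infs m φ) v ≤ M.eval (n + m) φ (Fin.append v w) := by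
  induction m with
  | zero =>
    refine le_of_eq ?_
    simp only [infs]
    congr 1
    funext j
    exact (Fin.append_left v w j).symm
  | succ m ih =>
    refine (ih (.inf φ) (Fin.init w)).trans ?_
    refine (eval_inf_le M φ _ (w (Fin.last m))).trans (le_of_eq ?_)
    congr 1
    rw [← Fin.append_snoc, Fin.snoc_init_self]

theorem le_infs {S : CSig} (M : CStructure S) {n : ℕ} (m : ℕ) (φ : CFormula S (n + m))
    (v : Fin n → M.Carrier) (r : ℝ)
    (h : ∀ w : Fin m → M.Carrier, r ≤ M.eval (n + m) φ (Fin.append v w)) :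
    r ≤ M.eval n (infs m φ) v := by
  induction m with
  | zero =>
    refine (h (fun i => i.elim0)).trans (le_of_eq ?_)
    simp only [infs]
    congr 1
    funext j
    exact Fin.append_left v _ j
  | succ m ih =>
    refine ih (.inf φ) fun w => le_eval_inf _ _ _ _ fun x => ?_
    rw [← Fin.append_snoc]
    exact h _

theorem sups_le {S : CSig} (M : CStructure S) (n : ℕ) (φ : CFormula S n) (r : ℝ)
    (h : ∀ v : Fin n → M.Carrier, M.eval n φ v ≤ r) : M.sval (sups n φ) ≤ r := by
  induction n with
  | zero => exact h _
  | succ m ih => exact ih _ fun v => eval_sup_le _ _ _ _ fun x => h _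

theorem le_sups {S : CSig} (M : CStructure S) (n : ℕ) (φ : CFormula S n)
    (v : Fin n → M.Carrier) : M.eval n φ v ≤ M.sval (sups n φ) := by
  induction n with
  | zero =>
    refine le_of_eq ?_
    simp only [sups, CStructure.sval]
    congr 1
    funext j
    exact j.elim0
  | succ m ih =>
    refine le_trans ?_ (ih (.sup φ) (Fin.init v))
    have := le_eval_sup M φ (Fin.init v) (v (Fin.last m))
    rwa [Fin.snoc_init_self] at this

/-! ### The two extension steps -/

/-- `M` satisfies every open `Π₂` condition that follows from `T`. -/
def SatPi2 {S : CSig} (T : CTheory S) (M : CStructure S) : Prop :=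
  ∀ c : CSentence S × ℝ, IsPiN S 2 c.1 → 0 < c.2 → EntailsOpen T c → M.sval c.1 < c.2

theorem stepA {S : CSig} (T : CTheory S) (M : CStructure S) (hM : SatPi2 T M) :
    ∃ (N : CStructure S) (f : CEmbedding M N), N.SatT T ∧
      (∀ (χ : AF S (M.Carrier ⊕ ℕ)) (r : ℝ),
        (∀ b : ℕ → M.Carrier, χ.val M (Sum.elim id b) ≤ r) →
        ∀ b : ℕ → N.Carrier, χ.val N (Sum.elim f.toFun b) ≤ r) := by
  obtain ⟨N, f, h1, h2⟩ := compact M ℕ (fun Q _ => Q.SatT T) (by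
    intro ψ hψ ε hε
    by_contra hcon
    push Not at hcon
    obtain ⟨p0⟩ := M.nonempty
    have : Nonempty M.Carrier := ⟨p0⟩
    obtain ⟨N1, c1, d1, hc1⟩ := code (fun j => Sum.elim id (fun _ => p0) (ψ.s j))
    obtain ⟨N2, c2, d2, hc2⟩ := code (fun j => Sum.elim (fun _ => 0) id (ψ.s j))
    obtain ⟨φ', hφ', hev⟩ := qf_rename ψ.qf
      (fun j => Sum.elim (Fin.castAdd N2 ∘ c1) (Fin.natAdd N1 ∘ c2) (ψ.s j))
    have hev2 : ∀ (Q : CStructure S) (v : Fin N1 → Q.Carrier) (w : Fin N2 → Q.Carrier),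
        Q.eval _ φ' (Fin.append v w) = ψ.val Q (Sum.elim (v ∘ c1) (w ∘ c2)) := by
      intro Q v w
      rw [hev, AF.val]
      congr 1
      funext j
      simp only [Function.comp]
      rcases ψ.s j with x | y <;> simp
    have hmax : max (1 - ε / 2) (1 / 2) < 1 := max_lt (by linarith) (by norm_num)
    have hlt := hM (sups N1 (infs N2 (.neg φ')), max (1 - ε / 2) (1 / 2))
      (sups_cl _ _ _ (.base (infs_cl _ _ _ (.base (.neg hφ')))))
      (lt_max_of_lt_right (by norm_num))
      (by
        intro Q hQ
        refine lt_of_le_of_lt (sups_le Q _ _ (1 - ε) ?_) (lt_max_of_lt_left (by linarith))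
        intro v
        obtain ⟨b, hb⟩ := hcon Q (v ∘ c1) hQ
        refine (infs_le Q N2 _ v (b ∘ d2)).trans ?_
        rw [eval_neg, hev2]
        have : ψ.val Q (Sum.elim (v ∘ c1) ((b ∘ d2) ∘ c2)) = ψ.val Q (Sum.elim (v ∘ c1) b) := by
          simp only [AF.val]
          congr 1
          funext j
          have := hc2 j
          simp only [Function.comp]
          revert this
          rcases ψ.s j with x | y
          · simp
          · intro h; simp at h; simp [h]
        rw [this]
        linarith)
    have h1 : 1 ≤ M.eval _ (infs N2 (.neg φ')) d1 := by
      apply le_infs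
      intro w
      rw [eval_neg, hev2]
      have : ψ.val M (Sum.elim (d1 ∘ c1) (w ∘ c2)) = ψ.val M (Sum.elim id (w ∘ c2)) := by
        simp only [AF.val]
        congr 1
        funext j
        have := hc1 j
        simp only [Function.comp]
        revert this
        rcases ψ.s j with x | y
        · intro h; simp at h; simp [h]
        · simp
      rw [this, hψ]
      simp
    have h2 := le_sups M N1 (infs N2 (.neg φ')) d1
    simp only at hlt
    linarith)
  refine ⟨N, f, ?_, h1⟩
  intro c hc
  have := h2 0 c.1 (fun i => i.elim0) c.2 (fun Q e hQ => by
    have := hQ c hc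
    unfold CStructure.sval at this
    convert this using 2)
  unfold CStructure.sval
  convert this using 2

theorem stepB {S : CSig} (M N : CStructure S) (f : CEmbedding M N)
    (hf : ∀ (χ : AF S (M.Carrier ⊕ ℕ)) (r : ℝ),
        (∀ b : ℕ → M.Carrier, χ.val M (Sum.elim id b) ≤ r) →
        ∀ b : ℕ → N.Carrier, χ.val N (Sum.elim f.toFun b) ≤ r) :
    ∃ (M' : CStructure S) (h : CEmbedding N M'),
      ∀ (n : ℕ) (φ : CFormula S n) (v : Fin n → M.Carrier),
        M'.eval n φ (h.toFun ∘ (f.toFun ∘ v)) = M.eval n φ v := by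
  have finj : Function.Injective f.toFun := by
    intro x y hxy
    have := f.isometry x y
    rw [hxy, dist_self] at this
    exact dist_eq_zero.1 this.symm
  obtain ⟨M', h, -, h2⟩ := compact N Empty
    (fun Q e => ∀ (n : ℕ) (φ : CFormula S n) (v : Fin n → M.Carrier),
        Q.eval n φ (e ∘ (f.toFun ∘ v)) = M.eval n φ v) (by
    intro ψ hψ ε hε
    have hψ0 : ψ.val N (Sum.elim id Empty.elim) = 0 := hψ _
    by_contra hcon
    push Not at hcon
    let s : Fin ψ.n → N.Carrier := fun j => Sum.elim id Empty.elim (ψ.s j)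
    obtain ⟨N', c, d, hcd⟩ := code s
    let g : N.Carrier → M.Carrier ⊕ ℕ := fun y =>
      if hy : ∃ x, f.toFun x = y then Sum.inl hy.choose else Sum.inr (c y)
    have gf : ∀ x, g (f.toFun x) = Sum.inl x := by
      intro x
      have hy : ∃ x', f.toFun x' = f.toFun x := ⟨x, rfl⟩
      simp only [g, hy, dite_true]
      exact congrArg _ (finj hy.choose_spec)
    let χ : AF S (M.Carrier ⊕ ℕ) := ⟨ψ.n, .neg ψ.φ, .neg ψ.qf, g ∘ s⟩
    have h1 := hf χ (1 - ε) (by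
      intro b
      obtain ⟨b', hb'⟩ := hcon M (fun y => Sum.elim id b (g y)) (by
        intro n φ v
        congr 1
        funext j
        simp [gf])
      have e1 : χ.val M (Sum.elim id b) =
          1 - ψ.val M (Sum.elim (fun y => Sum.elim id b (g y)) b') := by
        simp only [AF.val, χ, eval_neg]
        congr 2
        funext j
        simp only [Function.comp, s]
        rcases ψ.s j with x | y
        · simp
        · exact y.elim
      rw [e1]
      linarith) (fun k => if hk : k < N' then d ⟨k, hk⟩ else Classical.choice N.nonempty)
    have e2 : χ.val N (Sum.elim f.toFun
        (fun k => if hk : k < N' then d ⟨k, hk⟩ else Classical.choice N.nonempty)) =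
        1 - ψ.val N (Sum.elim id Empty.elim) := by
      simp only [AF.val, χ, eval_neg]
      congr 2
      funext j
      show Sum.elim _ _ (g (s j)) = s j
      by_cases hy : ∃ x, f.toFun x = s j
      · obtain ⟨x, hx⟩ := hy
        rw [← hx, gf]; rfl
      · simp only [g, hy, dite_false, Sum.elim_inr, Fin.is_lt, dite_true]
        exact hcd j
    rw [e2, hψ0] at h1
    linarith)
  refine ⟨M', h, fun n φ v => ?_⟩
  have a1 := h2 n φ (f.toFun ∘ v) (M.eval n φ v) (fun Q e he => (he n φ v).le)
  have a2 := h2 n (.neg φ) (f.toFun ∘ v) (1 - M.eval n φ v) (fun Q e he => by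
    rw [eval_neg, he])
  rw [eval_neg] at a2
  linarith

/-! ### Unions of elementary chains -/

theorem exists_union {S : CSig} (M : ℕ → CStructure S) (f : ∀ i, (M i).Carrier → (M (i + 1)).Carrier)
    (hf : ∀ i (n : ℕ) (φ : CFormula S n) (v : Fin n → (M i).Carrier),
      (M (i + 1)).eval n φ (f i ∘ v) = (M i).eval n φ v) :
    ∃ (C : CStructure S) (g : ∀ i, CEmbedding (M i) C),
      (∀ i x, (g (i + 1)).toFun (f i x) = (g i).toFun x) ∧
      Dense (⋃ i, Set.range (g i).toFun) ∧
      ∀ i (n : ℕ) (φ : CFormula S n) (v : Fin n → (M i).Carrier),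
        C.eval n φ ((g i).toFun ∘ v) = (M i).eval n φ v := by
  let push : ∀ {n k : ℕ}, n ≤ k → (M n).Carrier → (M k).Carrier :=
    fun {n k} h x => Nat.leRecOn (C := fun i => (M i).Carrier) h (fun {i} => f i) x
  have push_el : ∀ (i k : ℕ) (h : i ≤ k) (n : ℕ) (φ : CFormula S n) (v : Fin n → (M i).Carrier),
      (M k).eval n φ (push h ∘ v) = (M i).eval n φ v := by
    intro i k h n φ v
    induction k, h using Nat.le_induction with
    | base =>
      congr 1
      funext j
      exact Nat.leRecOn_self (C := fun i => (M i).Carrier) (next := fun {i} => f i) (v j)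
    | succ k hk ih =>
      rw [← ih, ← hf k]
      congr 1
      funext j
      exact Nat.leRecOn_succ (C := fun i => (M i).Carrier) (next := fun {i} => f i) hk (v j)
  have push_trans : ∀ {a b c : ℕ} (h1 : a ≤ b) (h2 : b ≤ c) x,
      push h2 (push h1 x) = push (h1.trans h2) x := by
    intro a b c h1 h2 x
    exact (Nat.leRecOn_trans (C := fun i => (M i).Carrier) (next := fun {i} => f i) h1 h2 x).symm
  let X : Type := Σ n, (M n).Carrier
  let e : X → ∀ k, (M k).Carrier := fun x k =>
    if h : x.1 ≤ k then push h x.2 else Classical.choice (M k).nonempty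
  have e_of : ∀ (n k : ℕ) (h : n ≤ k) (x : (M n).Carrier), e ⟨n, x⟩ k = push h x := by
    intro n k h x
    simp [e, h]
  let U : Ultrafilter ℕ := Ultrafilter.of atTop
  have hU : (U : Filter ℕ) ≤ atTop := Ultrafilter.of_le atTop
  have : Nonempty X := ⟨⟨0, Classical.choice (M 0).nonempty⟩⟩
  obtain ⟨C, ι, hd, hD, hR⟩ := exists_limit U M X e
  have L := fun {n : ℕ} (φ : CFormula S n) => los U M X e C ι hd hD hR (by
      intro n φ v ε hε
      let k0 : ℕ := Finset.univ.sup fun j => (v j).1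
      have hk0 : ∀ j, (v j).1 ≤ k0 := fun j =>
        Finset.le_sup (f := fun j => (v j).1) (Finset.mem_univ j)
      obtain ⟨x, hx⟩ := exists_inf_approx (M k0) φ (fun j => push (hk0 j) (v j).2) ε hε
      refine ⟨⟨k0, x⟩, ?_⟩
      filter_upwards [hU (eventually_ge_atTop k0)] with k hk
      have e1 : (fun j => e (v j) k) = push hk ∘ (fun j => push (hk0 j) (v j).2) := by
        funext j
        rw [Function.comp, push_trans]
        exact e_of _ _ _ _
      rw [e1, e_of _ _ hk, ← Fin.comp_snoc, push_el, push_el]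
      exact hx) φ
  have gel : ∀ i (n : ℕ) (φ : CFormula S n) (v : Fin n → (M i).Carrier),
        C.eval n φ ((fun x => ι ⟨i, x⟩) ∘ v) = (M i).eval n φ v := by
    intro i n φ v
    refine tendsto_nhds_unique (L φ (fun j => ⟨i, v j⟩)) ?_
    refine tendsto_const_nhds.congr' ?_
    filter_upwards [hU (eventually_ge_atTop i)] with k hk
    rw [← push_el i k hk]
    congr 1
    funext j
    exact (e_of _ _ hk _).symm
  refine ⟨C, fun i => embOfQF (fun x => ι ⟨i, x⟩) (fun n φ _ v => gel i n φ v), ?_, ?_, gel⟩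
  · intro i x
    show ι ⟨i + 1, f i x⟩ = ι ⟨i, x⟩
    rw [← dist_eq_zero]
    refine tendsto_nhds_unique (hD _ _) ?_
    refine tendsto_const_nhds.congr' ?_
    filter_upwards [hU (eventually_ge_atTop (i + 1))] with k hk
    rw [e_of _ _ hk, e_of _ _ ((Nat.le_succ i).trans hk), eq_comm, dist_eq_zero]
    have : f i x = push (Nat.le_succ i) x := 
      (Nat.leRecOn_succ' (C := fun i => (M i).Carrier) (next := fun {i} => f i) x).symm
    rw [this, push_trans]
  · refine hd.mono ?_
    rintro _ ⟨⟨i, x⟩, rfl⟩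
    exact Set.mem_iUnion.2 ⟨i, x, rfl⟩

/-- Composition of embeddings. -/
def compEmb {S : CSig} {M N P : CStructure S} (g : CEmbedding N P) (f : CEmbedding M N) :
    CEmbedding M P where
  toFun := g.toFun ∘ f.toFun
  isometry x y := by simp [g.isometry, f.isometry]
  map_rel i v := by rw [Function.comp_assoc, g.map_rel, f.map_rel]

theorem sval_eq_of_elem {S : CSig} {M N : CStructure S} (f : M.Carrier → N.Carrier)
    (hf : ∀ (n : ℕ) (φ : CFormula S n) (v : Fin n → M.Carrier),
      N.eval n φ (f ∘ v) = M.eval n φ v) (φ : CSentence S) : N.sval φ = M.sval φ := by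
  unfold CStructure.sval
  rw [← hf]
  congr 1
  funext j; exact j.elim0

theorem step {S : CSig} (T : CTheory S) (M : {M : CStructure S // SatPi2 T M}) :
    ∃ (N : CStructure S) (M' : {M : CStructure S // SatPi2 T M})
      (f : CEmbedding M.1 N) (h : CEmbedding N M'.1), N.SatT T ∧
      ∀ (n : ℕ) (φ : CFormula S n) (v : Fin n → M.1.Carrier),
        M'.1.eval n φ ((h.toFun ∘ f.toFun) ∘ v) = M.1.eval n φ v := by
  obtain ⟨N, f, hN, hf⟩ := stepA T M.1 M.2
  obtain ⟨M', h, hh⟩ := stepB M.1 N f hf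
  refine ⟨N, ⟨M', ?_⟩, f, h, hN, hh⟩
  intro c h1 h2 h3
  rw [sval_eq_of_elem (h.toFun ∘ f.toFun) hh]
  exact M.2 c h1 h2 h3

end ChainPf

/-- If the class of models of a theory `T` is preserved under unions of
chains — i.e. whenever `(Mᵢ)` is an increasing chain of models of `T` (given by embeddings
`fᵢ : Mᵢ → M_{i+1}`), any completion `N` of the union (a structure in which the chain
embeds compatibly with dense union of images) is again a model of `T` — then `T` is
inductive, i.e. axiomatizable by open conditions `sup_x̄ inf_ȳ φ(x̄,ȳ) < ε` with `φ`
quantifier-free. -/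
theorem inductive_of_chain_preservation (S : CSig) (T : CTheory S) (hT : IsTheory T)
    (hchain : ∀ (M : ℕ → CStructure S) (f : ∀ i, CEmbedding (M i) (M (i + 1))),
      (∀ i, (M i).SatT T) →
      ∀ (N : CStructure S) (g : ∀ i, CEmbedding (M i) N),
        (∀ i (x : (M i).Carrier), (g (i + 1)).toFun ((f i).toFun x) = (g i).toFun x) →
        Dense (⋃ i, Set.range (g i).toFun) →
        N.SatT T) :
    IsInductiveTheory T := by
  refine ⟨{c | IsPiN S 2 c.1 ∧ 0 < c.2 ∧ EntailsOpen T c}, fun c hc => ⟨hc.1, hc.2.1⟩, ?_⟩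
  intro M0
  refine ⟨fun h c hc => hc.2.2 M0 h, fun hM0 => ?_⟩
  have hM : ChainPf.SatPi2 T M0 := fun c h1 h2 h3 => hM0 c ⟨h1, h2, h3⟩
  choose N nx f h hN hel using ChainPf.step T
  let M : ℕ → {M : CStructure S // ChainPf.SatPi2 T M} :=
    fun n => Nat.rec ⟨M0, hM⟩ (fun _ m => nx m) n
  obtain ⟨C, g, hg, hd, hC⟩ := ChainPf.exists_union (fun i => (M i).1)
    (fun i => (h (M i)).toFun ∘ (f (M i)).toFun) (fun i n φ v => hel (M i) n φ v)
  have hsat := hchain (fun i => N (M i))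
    (fun i => ChainPf.compEmb (f (M (i + 1))) (h (M i))) (fun i => hN (M i)) C
    (fun i => ChainPf.compEmb (g (i + 1)) (h (M i)))
    (fun i x => hg (i + 1) ((h (M i)).toFun x))
    (by
      refine hd.mono ?_
      intro y hy
      obtain ⟨i, x, rfl⟩ := Set.mem_iUnion.1 hy
      exact Set.mem_iUnion.2 ⟨i, (f (M i)).toFun x, hg i x⟩)
  intro c hc
  have := hsat c hc
  rwa [ChainPf.sval_eq_of_elem (g 0).toFun (hC 0)] at this
end

section
/- If a continuous first-order theory T is model complete (i.e. for all models M, N of T, M ⊆ N implies M ≺ N), then T is inductive. -/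
open scoped Classical

/-! ### Bounds -/

lemma clampQ_mem (q : ℚ) : 0 ≤ clampQ q ∧ clampQ q ≤ 1 := by
  unfold clampQ
  exact ⟨le_max_left _ _, max_le zero_le_one (min_le_left _ _)⟩

lemma eval_mem {S : CSig} (M : CStructure S) : ∀ (n : ℕ) (φ : CFormula S n) (v : Fin n → M.Carrier),
    0 ≤ M.eval n φ v ∧ M.eval n φ v ≤ 1 := by
  intro n φ
  induction φ with
  | dst a b => intro v; exact ⟨dist_nonneg, M.bounded _ _⟩
  | rel i ts => intro v; exact ⟨M.rel_nonneg _ _, M.rel_le_one _ _⟩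
  | const q => intro v; exact clampQ_mem q
  | fmin φ ψ h1 h2 =>
    intro v; simp only [CStructure.eval]
    exact ⟨le_min (h1 v).1 (h2 v).1, (min_le_left _ _).trans (h1 v).2⟩
  | fmax φ ψ h1 h2 =>
    intro v; simp only [CStructure.eval]
    exact ⟨(h1 v).1.trans (le_max_left _ _), max_le (h1 v).2 (h2 v).2⟩
  | neg φ h1 =>
    intro v; simp only [CStructure.eval]
    constructor <;> linarith [(h1 v).1, (h1 v).2]
  | addT φ ψ h1 h2 =>
    intro v; simp only [CStructure.eval]
    exact ⟨le_min zero_le_one (add_nonneg (h1 v).1 (h2 v).1), min_le_left _ _⟩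
  | subT φ ψ h1 h2 =>
    intro v; simp only [CStructure.eval]
    exact ⟨le_max_left _ _, max_le zero_le_one (by linarith [(h1 v).2, (h2 v).1])⟩
  | absd φ ψ h1 h2 =>
    intro v; simp only [CStructure.eval]
    refine ⟨abs_nonneg _, abs_le.2 ⟨?_, ?_⟩⟩ <;> linarith [(h1 v).1, (h1 v).2, (h2 v).1, (h2 v).2]
  | scale q φ h1 =>
    intro v; simp only [CStructure.eval]
    exact ⟨mul_nonneg (clampQ_mem q).1 (h1 v).1,
      mul_le_one₀ (clampQ_mem q).2 (h1 v).1 (h1 v).2⟩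
  | inf φ h1 =>
    intro v; simp only [CStructure.eval]
    refine ⟨le_ciInf fun x => (h1 _).1, ?_⟩
    obtain ⟨x⟩ := M.nonempty
    exact (ciInf_le ⟨0, by rintro _ ⟨y, rfl⟩; exact (h1 _).1⟩ x).trans (h1 _).2
  | sup φ h1 =>
    intro v; simp only [CStructure.eval]
    refine ⟨?_, ciSup_le fun x => (h1 _).2⟩
    obtain ⟨x⟩ := M.nonempty
    exact (h1 (Fin.snoc v x)).1.trans (le_ciSup (f := fun x => M.eval _ φ (Fin.snoc v x))
      ⟨1, by rintro _ ⟨y, rfl⟩; exact (h1 _).2⟩ x)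

lemma eval_inf_le {S : CSig} (M : CStructure S) {n : ℕ} (φ : CFormula S (n+1))
    (v : Fin n → M.Carrier) (x : M.Carrier) :
    M.eval n (.inf φ) v ≤ M.eval (n+1) φ (Fin.snoc v x) := by
  simp only [CStructure.eval]
  exact ciInf_le ⟨0, by rintro _ ⟨y, rfl⟩; exact (eval_mem _ _ _ _).1⟩ x

lemma le_eval_sup {S : CSig} (M : CStructure S) {n : ℕ} (φ : CFormula S (n+1))
    (v : Fin n → M.Carrier) (x : M.Carrier) :
    M.eval (n+1) φ (Fin.snoc v x) ≤ M.eval n (.sup φ) v := by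
  simp only [CStructure.eval]
  exact le_ciSup (f := fun x => M.eval _ φ (Fin.snoc v x))
      ⟨1, by rintro _ ⟨y, rfl⟩; exact (eval_mem _ _ _ _).2⟩ x

/-! ### Ultralimits -/

section ult
open Filter Topology

lemma exists_ulim {I : Type} (U : Ultrafilter I) (f : I → ℝ) (hf : ∀ i, 0 ≤ f i ∧ f i ≤ 1) :
    ∃ L, Tendsto f U (𝓝 L) := by
  have h := (isCompact_Icc (a := (0:ℝ)) (b := 1)).ultrafilter_le_nhds (U.map f) (by
    rw [le_principal_iff]
    exact Filter.univ_mem' (f := (U : Filter I)) (s := f ⁻¹' Set.Icc 0 1) (fun i => hf i))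
  obtain ⟨L, -, hL⟩ := h
  exact ⟨L, hL⟩

noncomputable def ulim {I : Type} (U : Ultrafilter I) (f : I → ℝ) : ℝ := limUnder (U : Filter I) f

lemma tendsto_ulim {I : Type} (U : Ultrafilter I) (f : I → ℝ) (hf : ∀ i, 0 ≤ f i ∧ f i ≤ 1) :
    Tendsto f U (𝓝 (ulim U f)) := tendsto_nhds_limUnder (exists_ulim U f hf)

variable {S : CSig} {I : Type} (U : Ultrafilter I) (M : I → CStructure S)

/-- The product carrier with the ultralimit pseudometric. -/
def PreUlt (_U : Ultrafilter I) (M : I → CStructure S) : Type := ∀ i, (M i).Carrier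

lemma pre_tendsto (x y : PreUlt U M) :
    Tendsto (fun i => dist (x i) (y i)) U (𝓝 (ulim U fun i => dist (x i) (y i))) :=
  tendsto_ulim U _ fun i => ⟨dist_nonneg, (M i).bounded _ _⟩

noncomputable instance : PseudoMetricSpace (PreUlt U M) where
  dist x y := ulim U fun i => dist (x i) (y i)
  dist_self x := by
    refine tendsto_nhds_unique (pre_tendsto U M x x) ?_
    simp
  dist_comm x y := by
    refine tendsto_nhds_unique (pre_tendsto U M x y) ?_
    simpa only [dist_comm] using pre_tendsto U M y x
  dist_triangle x y z :=
    le_of_tendsto_of_tendsto' (pre_tendsto U M x z)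
      ((pre_tendsto U M x y).add (pre_tendsto U M y z)) fun i => dist_triangle _ _ _

lemma pre_dist (x y : PreUlt U M) :
    Tendsto (fun i => dist (x i) (y i)) U (𝓝 (dist x y)) := pre_tendsto U M x y

lemma pre_complete : CompleteSpace (PreUlt U M) := by
  refine Metric.complete_of_convergent_controlled_sequences (fun n => (1/2 : ℝ)^n)
    (fun n => by positivity) ?_
  intro x hx
  let A : ℕ → I → Prop := fun n i => ∀ m < n, dist (x m i) (x (m+1) i) ≤ (1/2:ℝ)^m
  have hA : ∀ n, ∀ᶠ i in (U : Filter I), A n i := by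
    intro n
    refine (Set.finite_lt_nat n).eventually_all.2 ?_
    intro m _
    exact ((pre_dist U M (x m) (x (m+1))).eventually
      (gt_mem_nhds (hx m m (m+1) le_rfl (Nat.le_succ m)))).mono fun i h => le_of_lt h
  let z : ∀ i, ℕ → (M i).Carrier := fun i n =>
    Nat.rec (x 0 i) (fun n y => if A (n+1) i then x (n+1) i else y) n
  have hz : ∀ i n, A n i → z i n = x n i := by
    intro i n h
    cases n with
    | zero => rfl
    | succ n => exact if_pos h
  have hd : ∀ i n, dist (z i n) (z i (n+1)) ≤ 1 * (1/2:ℝ)^n := by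
    intro i n
    by_cases h : A (n+1) i
    · rw [hz i (n+1) h, hz i n (fun m hm => h m (hm.trans (Nat.lt_succ_self n))), one_mul]
      exact h n (Nat.lt_succ_self n)
    · have : z i (n+1) = z i n := if_neg h
      rw [this, dist_self]; positivity
  have hc : ∀ i, ∃ y, Tendsto (z i) atTop (𝓝 y) := fun i =>
    cauchySeq_tendsto_of_complete (cauchySeq_of_le_geometric (1/2) 1 (by norm_num) (hd i))
  obtain ⟨y, hy⟩ : ∃ y : PreUlt U M, ∀ i, Tendsto (z i) atTop (𝓝 (y i)) :=
    ⟨fun i => (hc i).choose, fun i => (hc i).choose_spec⟩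
  refine ⟨y, ?_⟩
  have hb : ∀ n, dist (x n) y ≤ 2 * (1/2:ℝ)^n := by
    intro n
    refine le_of_tendsto (pre_dist U M (x n) y) ((hA n).mono fun i h => ?_)
    have := dist_le_of_le_geometric_of_tendsto (1/2) 1 (by norm_num) (hd i) (hy i) n
    rw [hz i n h] at this
    refine this.trans (le_of_eq ?_)
    ring
  rw [tendsto_iff_dist_tendsto_zero]
  refine squeeze_zero (fun _ => dist_nonneg) hb ?_
  simpa using (tendsto_pow_atTop_nhds_zero_of_lt_one (r := (1/2:ℝ)) (by norm_num)
    (by norm_num)).const_mul 2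

noncomputable def preRel (k : ℕ) (v : Fin (S.arity k) → PreUlt U M) : ℝ :=
  ulim U fun i => (M i).rel k fun j => v j i

lemma preRel_tendsto (k : ℕ) (v : Fin (S.arity k) → PreUlt U M) :
    Tendsto (fun i => (M i).rel k fun j => v j i) U (𝓝 (preRel U M k v)) :=
  tendsto_ulim U _ fun i => ⟨(M i).rel_nonneg _ _, (M i).rel_le_one _ _⟩

lemma preRel_uc (k : ℕ) (ε : ℝ) (hε : 0 < ε) (v w : Fin (S.arity k) → PreUlt U M)
    (h : ∀ j, dist (v j) (w j) < S.modulus k ε) : |preRel U M k v - preRel U M k w| ≤ ε := by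
  refine le_of_tendsto ((preRel_tendsto U M k v).sub (preRel_tendsto U M k w)).abs ?_
  have : ∀ᶠ i in (U : Filter I), ∀ j, dist (v j i) (w j i) < S.modulus k ε :=
    eventually_all.2 fun j => (pre_dist U M (v j) (w j)).eventually (gt_mem_nhds (h j))
  exact this.mono fun i hi => (M i).rel_uc k ε hε _ _ hi

/-- Representative of a point. -/
noncomputable def upRep (x : SeparationQuotient (PreUlt U M)) : PreUlt U M :=
  Function.surjInv SeparationQuotient.surjective_mk x

lemma mk_upRep (x : SeparationQuotient (PreUlt U M)) : SeparationQuotient.mk (upRep U M x) = x :=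
  Function.surjInv_eq SeparationQuotient.surjective_mk x

lemma dist_upRep (x y : SeparationQuotient (PreUlt U M)) :
    dist (upRep U M x) (upRep U M y) = dist x y := by
  rw [← SeparationQuotient.dist_mk, mk_upRep, mk_upRep]

lemma dist_upRep_mk (x : PreUlt U M) :
    dist (upRep U M (SeparationQuotient.mk x)) x = 0 := by
  rw [← SeparationQuotient.dist_mk, mk_upRep, dist_self]

/-- The metric ultraproduct. -/
noncomputable def Ult : CStructure S where
  Carrier := SeparationQuotient (PreUlt U M)
  metric := inferInstance
  nonempty := ⟨SeparationQuotient.mk (fun i => (M i).nonempty.some : PreUlt U M)⟩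
  complete := by
    have := pre_complete U M
    infer_instance
  bounded := by
    intro x y
    rw [← dist_upRep]
    exact le_of_tendsto' (pre_dist U M _ _) fun i => (M i).bounded _ _
  rel k v := preRel U M k fun j => upRep U M (v j)
  rel_nonneg k v := ge_of_tendsto' (preRel_tendsto U M k _) fun i => (M i).rel_nonneg _ _
  rel_le_one k v := le_of_tendsto' (preRel_tendsto U M k _) fun i => (M i).rel_le_one _ _
  rel_uc k ε hε v w h := by
    refine preRel_uc U M k ε hε _ _ fun j => ?_
    rw [dist_upRep]; exact h j

/-- The quotient map. -/
noncomputable def umk (x : PreUlt U M) : (Ult U M).Carrier := (SeparationQuotient.mk x : SeparationQuotient _)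

lemma umk_surj : Function.Surjective (umk U M) := SeparationQuotient.surjective_mk

lemma umk_dist (x y : PreUlt U M) : 
    Tendsto (fun i => dist (x i) (y i)) U (𝓝 (dist (umk U M x) (umk U M y))) := by
  have h : dist (umk U M x) (umk U M y) = dist x y := SeparationQuotient.dist_mk x y
  rw [h]; exact pre_dist U M x y

lemma umk_rel (k : ℕ) (v : Fin (S.arity k) → PreUlt U M) :
    Tendsto (fun i => (M i).rel k fun j => v j i) U
      (𝓝 ((Ult U M).rel k fun j => umk U M (v j))) := by
  have h : (Ult U M).rel k (fun j => umk U M (v j)) = preRel U M k v := by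
    have : ∀ ε > 0, |preRel U M k (fun j => upRep U M (umk U M (v j))) - preRel U M k v| ≤ ε := by
      intro ε hε
      refine preRel_uc U M k ε hε _ _ fun j => ?_
      have h0 : dist (upRep U M (umk U M (v j))) (v j) = 0 := by
        exact dist_upRep_mk U M (v j)
      rw [h0]; exact S.modulus_pos k ε hε
    have h2 := le_of_forall_pos_le_add (a := |preRel U M k (fun j => upRep U M (umk U M (v j))) - preRel U M k v|)
      (b := 0) (fun ε hε => by simpa using this ε hε)
    exact sub_eq_zero.1 (abs_nonpos_iff.1 h2)
  rw [h]; exact preRel_tendsto U M k v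

lemma snoc_umk {n : ℕ} (v : Fin n → PreUlt U M) (x : PreUlt U M) :
    (Fin.snoc (fun j => umk U M (v j)) (umk U M x) : Fin (n+1) → (Ult U M).Carrier)
      = fun j => umk U M ((Fin.snoc v x : Fin (n+1) → PreUlt U M) j) := by
  funext j
  refine Fin.lastCases ?_ (fun j => ?_) j <;> simp

lemma snoc_proj {n : ℕ} (v : Fin n → PreUlt U M) (x : PreUlt U M) (i : I) :
    (fun j => ((Fin.snoc v x : Fin (n+1) → PreUlt U M) j) i)
      = (Fin.snoc (fun j => v j i) (x i) : Fin (n+1) → (M i).Carrier) := by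
  funext j
  refine Fin.lastCases ?_ (fun j => ?_) j <;> simp

/-- The theorem of Łoś. -/
theorem los : ∀ (n : ℕ) (φ : CFormula S n) (v : Fin n → PreUlt U M),
    Tendsto (fun i => (M i).eval n φ fun j => v j i) U
      (𝓝 ((Ult U M).eval n φ fun j => umk U M (v j))) := by
  intro n φ
  induction φ with
  | dst a b => intro v; simp only [CStructure.eval]; exact umk_dist U M _ _
  | rel i ts => intro v; simp only [CStructure.eval]; exact umk_rel U M i (fun j => v (ts j))
  | const q => intro v; simp only [CStructure.eval]; exact tendsto_const_nhds
  | fmin φ ψ h1 h2 => intro v; simp only [CStructure.eval]; exact (h1 v).min (h2 v)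
  | fmax φ ψ h1 h2 => intro v; simp only [CStructure.eval]; exact (h1 v).max (h2 v)
  | neg φ h1 => intro v; simp only [CStructure.eval]; exact tendsto_const_nhds.sub (h1 v)
  | addT φ ψ h1 h2 =>
    intro v; simp only [CStructure.eval]; exact tendsto_const_nhds.min ((h1 v).add (h2 v))
  | subT φ ψ h1 h2 =>
    intro v; simp only [CStructure.eval]; exact tendsto_const_nhds.max ((h1 v).sub (h2 v))
  | absd φ ψ h1 h2 => intro v; simp only [CStructure.eval]; exact ((h1 v).sub (h2 v)).abs
  | scale q φ h1 => intro v; simp only [CStructure.eval]; exact (h1 v).const_mul _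
  | @inf n φ h1 =>
    intro v
    obtain ⟨L, hL⟩ := exists_ulim U (fun i => (M i).eval n (.inf φ) fun j => v j i)
      (fun i => eval_mem _ _ _ _)
    suffices h : (Ult U M).eval n (.inf φ) (fun j => umk U M (v j)) = L by rw [h]; exact hL
    apply le_antisymm
    · refine le_of_forall_pos_le_add fun ε hε => ?_
      have : ∀ i, ∃ x : (M i).Carrier, (M i).eval (n+1) φ (Fin.snoc (fun j => v j i) x)
          < (M i).eval n (.inf φ) (fun j => v j i) + ε := by
        intro i
        refine exists_lt_of_ciInf_lt ?_
        simp only [CStructure.eval]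
        linarith
      obtain ⟨x, hx⟩ : ∃ x : PreUlt U M, ∀ i,
          (M i).eval (n+1) φ (Fin.snoc (fun j => v j i) (x i))
          < (M i).eval n (.inf φ) (fun j => v j i) + ε :=
        ⟨fun i => (this i).choose, fun i => (this i).choose_spec⟩
      refine (eval_inf_le _ φ _ (umk U M x)).trans ?_
      rw [snoc_umk]
      refine le_of_tendsto_of_tendsto' (h1 _) (hL.add_const ε) fun i => ?_
      rw [snoc_proj]; exact (hx i).le
    · simp only [CStructure.eval]
      refine le_ciInf fun x => ?_
      obtain ⟨x, rfl⟩ := umk_surj U M x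
      rw [snoc_umk]
      refine le_of_tendsto_of_tendsto' hL (h1 _) fun i => ?_
      rw [snoc_proj]; exact eval_inf_le _ _ _ _
  | @sup n φ h1 =>
    intro v
    obtain ⟨L, hL⟩ := exists_ulim U (fun i => (M i).eval n (.sup φ) fun j => v j i)
      (fun i => eval_mem _ _ _ _)
    suffices h : (Ult U M).eval n (.sup φ) (fun j => umk U M (v j)) = L by rw [h]; exact hL
    apply le_antisymm
    · simp only [CStructure.eval]
      refine ciSup_le fun x => ?_
      obtain ⟨x, rfl⟩ := umk_surj U M x
      rw [snoc_umk]
      refine le_of_tendsto_of_tendsto' (h1 _) hL fun i => ?_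
      rw [snoc_proj]; exact le_eval_sup _ _ _ _
    · refine le_of_forall_pos_le_add fun ε hε => ?_
      have : ∀ i, ∃ x : (M i).Carrier, (M i).eval n (.sup φ) (fun j => v j i) - ε
          < (M i).eval (n+1) φ (Fin.snoc (fun j => v j i) x) := by
        intro i
        refine exists_lt_of_lt_ciSup ?_
        simp only [CStructure.eval]
        linarith
      obtain ⟨x, hx⟩ : ∃ x : PreUlt U M, ∀ i, (M i).eval n (.sup φ) (fun j => v j i) - ε
          < (M i).eval (n+1) φ (Fin.snoc (fun j => v j i) (x i)) :=
        ⟨fun i => (this i).choose, fun i => (this i).choose_spec⟩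
      refine le_trans ?_ (add_le_add_left (le_eval_sup _ φ _ (umk U M x)) ε)
      rw [snoc_umk]
      refine le_of_tendsto_of_tendsto' hL ((h1 _).add_const ε) fun i => ?_
      rw [snoc_proj]; linarith [hx i]

/-! ### Quantifier-free formulas over arbitrary variable types -/

/-- A fragment of the quantifier-free formulas, with variables in `V`. -/
inductive QFm (S : CSig) (V : Type) : Type
  | dst : V → V → QFm S V
  | rel (i : ℕ) : (Fin (S.arity i) → V) → QFm S V
  | fmin : QFm S V → QFm S V → QFm S V
  | neg : QFm S V → QFm S V
  | addc : ℚ → QFm S V → QFm S V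

namespace QFm

noncomputable def ev {V : Type} (N : CStructure S) (v : V → N.Carrier) : QFm S V → ℝ
  | dst a b => dist (v a) (v b)
  | rel i ts => N.rel i fun j => v (ts j)
  | fmin φ ψ => min (ev N v φ) (ev N v ψ)
  | neg φ => 1 - ev N v φ
  | addc q φ => min 1 (ev N v φ + clampQ q)

def relabel {V W : Type} (ρ : V → W) : QFm S V → QFm S W
  | dst a b => dst (ρ a) (ρ b)
  | rel i ts => rel i fun j => ρ (ts j)
  | fmin φ ψ => fmin (relabel ρ φ) (relabel ρ ψ)
  | neg φ => neg (relabel ρ φ)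
  | addc q φ => addc q (relabel ρ φ)

lemma ev_relabel {V W : Type} (ρ : V → W) (N : CStructure S) (v : W → N.Carrier) (φ : QFm S V) :
    ev N v (relabel ρ φ) = ev N (fun x => v (ρ x)) φ := by
  induction φ <;> simp_all [ev, relabel]

def toC {n : ℕ} : QFm S (Fin n) → CFormula S n
  | dst a b => .dst a b
  | rel i ts => .rel i ts
  | fmin φ ψ => .fmin (toC φ) (toC ψ)
  | neg φ => .neg (toC φ)
  | addc q φ => .addT (toC φ) (.const q)

lemma toC_qf {n : ℕ} (φ : QFm S (Fin n)) : IsQF (toC φ) := by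
  induction φ with
  | dst a b => exact .dst a b
  | rel i ts => exact .rel i ts
  | fmin φ ψ h1 h2 => exact .fmin h1 h2
  | neg φ h => exact .neg h
  | addc q φ h => exact .addT h (.const q)

lemma eval_toC {n : ℕ} (N : CStructure S) (v : Fin n → N.Carrier) (φ : QFm S (Fin n)) :
    N.eval n (toC φ) v = ev N v φ := by
  induction φ <;> simp_all [ev, toC, CStructure.eval]

lemma ev_mem {V : Type} (N : CStructure S) (v : V → N.Carrier) (φ : QFm S V) :
    0 ≤ ev N v φ ∧ ev N v φ ≤ 1 := by
  induction φ with
  | dst a b => exact ⟨dist_nonneg, N.bounded _ _⟩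
  | rel i ts => exact ⟨N.rel_nonneg _ _, N.rel_le_one _ _⟩
  | fmin φ ψ h1 h2 => exact ⟨le_min h1.1 h2.1, (min_le_left _ _).trans h1.2⟩
  | neg φ h => simp only [ev]; constructor <;> linarith [h.1, h.2]
  | addc q φ h => exact ⟨le_min zero_le_one (add_nonneg h.1 (clampQ_mem q).1), min_le_left _ _⟩

/-- Finite support. -/
lemma supp {V : Type} (φ : QFm S V) : ∃ F : Finset V, ∀ (N : CStructure S) (v w : V → N.Carrier),
    (∀ x ∈ F, v x = w x) → ev N v φ = ev N w φ := by
  induction φ with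
  | dst a b =>
    refine ⟨{a, b}, fun N v w h => ?_⟩
    simp only [ev]; rw [h a (by simp), h b (by simp)]
  | rel i ts =>
    refine ⟨Finset.univ.image ts, fun N v w h => ?_⟩
    simp only [ev]; congr 1; funext j; exact h _ (by simp)
  | fmin φ ψ h1 h2 =>
    obtain ⟨F, hF⟩ := h1
    obtain ⟨G, hG⟩ := h2
    refine ⟨F ∪ G, fun N v w h => ?_⟩
    simp only [ev]
    rw [hF N v w fun x hx => h x (Finset.mem_union_left _ hx),
      hG N v w fun x hx => h x (Finset.mem_union_right _ hx)]
  | neg φ h1 =>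
    obtain ⟨F, hF⟩ := h1
    exact ⟨F, fun N v w h => by simp only [ev]; rw [hF N v w h]⟩
  | addc q φ h1 =>
    obtain ⟨F, hF⟩ := h1
    exact ⟨F, fun N v w h => by simp only [ev]; rw [hF N v w h]⟩

lemma los {V : Type} (φ : QFm S V) (v : V → PreUlt U M) :
    Tendsto (fun i => ev (M i) (fun x => v x i) φ) U (𝓝 (ev (Ult U M) (fun x => umk U M (v x)) φ)) := by
  induction φ with
  | dst a b => exact umk_dist U M _ _
  | rel i ts => exact umk_rel U M i fun j => v (ts j)
  | fmin φ ψ h1 h2 => exact h1.min h2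
  | neg φ h => exact tendsto_const_nhds.sub h
  | addc q φ h => exact tendsto_const_nhds.min (h.add_const _)

/-- If thresholds transfer, values agree. -/
lemma transfer_le {V : Type} {N K : CStructure S} (v : V → N.Carrier) (w : V → K.Carrier)
    (h : ∀ χ, 1 ≤ ev N v χ → 1 ≤ ev K w χ) (χ : QFm S V) : ev N v χ ≤ ev K w χ := by
  refine le_of_forall_rat_lt_imp_le fun q hq => ?_
  rcases lt_or_ge (q : ℝ) 0 with h0 | h0
  · exact h0.le.trans (ev_mem _ _ _).1
  have h1 : (q : ℝ) ≤ 1 := hq.le.trans (ev_mem _ _ _).2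
  have hc : clampQ (1 - q) = 1 - q := by
    unfold clampQ
    push_cast
    rw [min_eq_right (by linarith), max_eq_right (by linarith)]
  have := h (addc (1 - q) χ) (by
    simp only [ev, hc]; exact le_min le_rfl (by linarith))
  simp only [ev, hc] at this
  linarith [(le_min_iff.1 this).2]

lemma transfer {V : Type} {N K : CStructure S} (v : V → N.Carrier) (w : V → K.Carrier)
    (h : ∀ χ, 1 ≤ ev N v χ → 1 ≤ ev K w χ) (χ : QFm S V) : ev N v χ = ev K w χ := by
  refine le_antisymm (transfer_le v w h χ) ?_
  have := transfer_le v w h (neg χ)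
  simp only [ev] at this
  linarith

/-- An ultrafilter on conditions. -/
lemma exists_ultra {V : Type} (P : QFm S V → Prop) (hne : ∃ χ, P χ)
    (hmin : ∀ χ ψ, P χ → P ψ → P (fmin χ ψ)) :
    ∃ U : Ultrafilter ({χ // P χ} × ℕ), ∀ p : {χ // P χ} × ℕ, ∀ᶠ p' in (U : Filter ({χ // P χ} × ℕ)),
      p.2 ≤ p'.2 ∧ ∀ (N : CStructure S) v, ev N v p'.1.1 ≤ ev N v p.1.1 := by
  let pre : Preorder ({χ // P χ} × ℕ) :=
    { le := fun p p' => p.2 ≤ p'.2 ∧ ∀ (N : CStructure S) v, ev N v p'.1.1 ≤ ev N v p.1.1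
      le_refl := fun p => ⟨le_rfl, fun _ _ => le_rfl⟩
      le_trans := fun a b c h h' => ⟨h.1.trans h'.1, fun N v => (h'.2 N v).trans (h.2 N v)⟩ }
  obtain ⟨χ₀, h₀⟩ := hne
  have ne : Nonempty ({χ // P χ} × ℕ) := ⟨(⟨χ₀, h₀⟩, 0)⟩
  have dir : @IsDirected ({χ // P χ} × ℕ) pre.le := ⟨fun a b =>
    ⟨(⟨fmin a.1.1 b.1.1, hmin _ _ a.1.2 b.1.2⟩, max a.2 b.2),
      ⟨le_max_left _ _, fun N v => min_le_left _ _⟩,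
      ⟨le_max_right _ _, fun N v => min_le_right _ _⟩⟩⟩
  have nb : (@atTop _ pre).NeBot := @atTop_neBot _ pre dir ne
  refine ⟨@Ultrafilter.of _ (@atTop _ pre) nb, fun p => ?_⟩
  exact (@Ultrafilter.of_le _ (@atTop _ pre) nb) (@eventually_ge_atTop _ pre p)

end QFm

end ult

/-! ### Quantifier blocks -/

def allSup {S : CSig} : ∀ n : ℕ, CFormula S n → CFormula S 0
  | 0, φ => φ
  | n + 1, φ => allSup n (.sup φ)

def infs {S : CSig} {n : ℕ} : ∀ k : ℕ, CFormula S (n + k) → CFormula S n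
  | 0, φ => φ
  | k + 1, φ => infs k (.inf (n := n + k) φ)

lemma infs_cl {S : CSig} {P : ∀ n, CFormula S n → Prop} {n : ℕ} : ∀ (k : ℕ) (φ : CFormula S (n + k)),
    InfCl P φ → InfCl P (infs k φ)
  | 0, _, h => h
  | k + 1, _, h => infs_cl k _ (.step h)

lemma allSup_cl {S : CSig} {P : ∀ n, CFormula S n → Prop} : ∀ (n : ℕ) (φ : CFormula S n),
    SupCl P φ → SupCl P (allSup n φ)
  | 0, _, h => h
  | n + 1, _, h => allSup_cl n _ (.step h)

lemma infs_le {S : CSig} (N : CStructure S) {n : ℕ} : ∀ (k : ℕ) (φ : CFormula S (n + k))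
    (u : Fin (n + k) → N.Carrier),
    N.eval n (infs k φ) (fun i => u (Fin.castAdd k i)) ≤ N.eval (n + k) φ u
  | 0, φ, u => le_rfl
  | k + 1, φ, u => by
    have h1 := infs_le N k (.inf (n := n + k) φ) (fun i => u (Fin.castSucc i))
    refine le_trans h1 ((eval_inf_le N (n := n + k) φ _ (u (Fin.last (n + k)))).trans (le_of_eq ?_))
    congr 1
    funext j
    refine Fin.lastCases ?_ (fun j => ?_) j <;> simp

lemma lt_of_infs {S : CSig} (N : CStructure S) {n : ℕ} (r : ℝ) : ∀ (k : ℕ) (φ : CFormula S (n + k))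
    (v : Fin n → N.Carrier), N.eval n (infs k φ) v < r →
    ∃ u : Fin (n + k) → N.Carrier, (∀ i, u (Fin.castAdd k i) = v i) ∧ N.eval (n + k) φ u < r
  | 0, φ, v, h => ⟨v, fun _ => rfl, h⟩
  | k + 1, φ, v, h => by
    obtain ⟨u, hu, h2⟩ := lt_of_infs N r k (.inf (n := n + k) φ) v h
    simp only [CStructure.eval] at h2
    obtain ⟨x, hx⟩ := exists_lt_of_ciInf_lt h2
    refine ⟨(Fin.snoc u x : Fin (n + k + 1) → N.Carrier), fun i => ?_, hx⟩
    rw [← hu i]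
    exact Fin.snoc_castSucc (α := fun _ => N.Carrier) x u (Fin.castAdd k i)

lemma allSup_le {S : CSig} (N : CStructure S) (r : ℝ) : ∀ (n : ℕ) (φ : CFormula S n),
    (∀ v, N.eval n φ v ≤ r) → N.sval (allSup n φ) ≤ r
  | 0, φ, h => h _
  | n + 1, φ, h => allSup_le N r n (.sup φ) fun v => by
      simp only [CStructure.eval]; exact ciSup_le fun x => h _

lemma le_allSup {S : CSig} (N : CStructure S) : ∀ (n : ℕ) (φ : CFormula S n)
    (v : Fin n → N.Carrier), N.eval n φ v ≤ N.sval (allSup n φ)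
  | 0, φ, v => le_of_eq (congrArg _ (funext fun i => i.elim0))
  | n + 1, φ, v => by
    refine le_trans ?_ (le_allSup N n (.sup φ) (fun i => v i.castSucc))
    refine le_trans (le_of_eq ?_) (le_eval_sup N φ _ (v (Fin.last n)))
    congr 1
    funext j
    refine Fin.lastCases ?_ (fun j => ?_) j <;> simp

lemma exists_finite_code {W : Type} [Nonempty W] (F : Finset W) :
    ∃ (n : ℕ) (ρ : W → Fin n) (σ : Fin n → W), ∀ x ∈ F, σ (ρ x) = x := by
  obtain ⟨d⟩ := ‹Nonempty W›
  let G := insert d F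
  have hd : d ∈ G := Finset.mem_insert_self _ _
  refine ⟨G.card, fun x => if h : x ∈ G then G.equivFin ⟨x, h⟩ else G.equivFin ⟨d, hd⟩,
    fun j => (G.equivFin.symm j).1, fun x hx => ?_⟩
  have : x ∈ G := Finset.mem_insert_of_mem hx
  simp [this]

/-! ### The main argument -/

open Filter Topology

/-- The open Π₂ consequences of `T`. -/
def Pi2Cons {S : CSig} (T : CTheory S) : Set (CSentence S × ℝ) :=
  {c | (IsPiN S 2 c.1 ∧ 0 < c.2) ∧ EntailsOpen T c}

/-- `f` preserves universal conditions. -/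
def OneClosed {S : CSig} (M N : CStructure S) (f : M.Carrier → N.Carrier) : Prop :=
  ∀ χ : QFm S (M.Carrier ⊕ ℕ), (∀ c : ℕ → M.Carrier, 1 ≤ χ.ev M (Sum.elim id c)) →
    ∀ c : ℕ → N.Carrier, 1 ≤ χ.ev N (Sum.elim f c)

lemma finsat {S : CSig} {T : CTheory S} {M : CStructure S}
    (hM : ∀ c ∈ Pi2Cons T, M.sval c.1 < c.2) (χ : QFm S (M.Carrier ⊕ ℕ))
    (hχ : ∀ c : ℕ → M.Carrier, 1 ≤ χ.ev M (Sum.elim id c)) (ε : ℝ) (hε : 0 < ε) (hε1 : ε ≤ 1) :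
    ∃ N : CStructure S, N.SatT T ∧ ∃ b : M.Carrier → N.Carrier,
      ∀ c : ℕ → N.Carrier, 1 - ε ≤ χ.ev N (Sum.elim b c) := by
  by_contra hcon
  push Not at hcon
  obtain ⟨F, hF⟩ := χ.supp
  obtain ⟨n, ρ₁, σ₁, h₁⟩ := exists_finite_code (F.preimage Sum.inl Sum.inl_injective.injOn)
  obtain ⟨k, ρ₂, σ₂, h₂⟩ := exists_finite_code (F.preimage Sum.inr Sum.inr_injective.injOn)
  let ρ : M.Carrier ⊕ ℕ → Fin (n + k) :=
    Sum.elim (fun m => Fin.castAdd k (ρ₁ m)) (fun i => Fin.natAdd n (ρ₂ i))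
  let φ : CFormula S (n + k) := (χ.relabel ρ).toC
  have hev : ∀ (N : CStructure S) (u : Fin (n + k) → N.Carrier),
      N.eval (n + k) φ u = χ.ev N (fun x => u (ρ x)) := by
    intro N u
    rw [QFm.eval_toC, QFm.ev_relabel]
  have hA : (allSup n (infs k φ), 1 - ε / 2) ∈ Pi2Cons T := by
    refine ⟨⟨?_, ?_⟩, ?_⟩
    · exact allSup_cl n _ (.base (infs_cl k _ (.base (QFm.toC_qf _))))
    · show 0 < 1 - ε / 2
      linarith
    · intro N hN
      refine lt_of_le_of_lt (b := 1 - ε) (allSup_le N _ n _ fun v => ?_) (by simp only; linarith)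
      obtain ⟨c, hc⟩ := hcon N hN (fun m => v (ρ₁ m))
      have h := infs_le N k φ (Fin.append v (fun j => c (σ₂ j)))
      simp only [Fin.append_left] at h
      refine h.trans (le_trans (le_of_eq ?_) hc.le)
      rw [hev]
      apply hF
      rintro (m | i) hx
      · simp [ρ]
      · simp [ρ, h₂ i (by simpa using hx)]
  have hlt := hM _ hA
  have h3 := (le_allSup M n (infs k φ) σ₁).trans_lt hlt
  obtain ⟨u, hu, h4⟩ := lt_of_infs M _ k φ σ₁ h3
  have h5 := hχ (fun i => u (Fin.natAdd n (ρ₂ i)))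
  rw [hev, hF M _ (Sum.elim id (fun i => u (Fin.natAdd n (ρ₂ i))))] at h4
  · simp only at h4; linarith
  · rintro (m | i) hx
    · simp [ρ, hu, h₁ m (by simpa using hx)]
    · simp [ρ]

lemma sat_ult {S : CSig} {T : CTheory S} {I : Type} (U : Ultrafilter I) (N : I → CStructure S)
    (h : ∀ i, (N i).SatT T) : (Ult U N).SatT T := by
  intro c hc
  have := los U N 0 c.1 (fun i => i.elim0)
  have e : (fun j : Fin 0 => umk U N ((fun i : Fin 0 => i.elim0) j)) = fun i => i.elim0 :=
    funext fun i => i.elim0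
  rw [e] at this
  refine le_of_tendsto' this fun i => ?_
  have e' : (fun j : Fin 0 => ((fun i : Fin 0 => i.elim0 : Fin 0 → PreUlt U N) j) i)
      = fun i => i.elim0 := funext fun i => i.elim0
  rw [e']
  exact h i c hc

lemma ge_one_of_tendsto {J : Type} {U : Ultrafilter (J × ℕ)} {g : J × ℕ → ℝ} {L : ℝ}
    (h : Tendsto g U (𝓝 L))
    (hg : ∀ m : ℕ, ∀ᶠ p in (U : Filter (J × ℕ)), 1 - 1 / ((m : ℝ) + 1) ≤ g p) : 1 ≤ L := by
  have h1 : ∀ m : ℕ, 1 - 1 / ((m : ℝ) + 1) ≤ L := fun m => ge_of_tendsto h (hg m)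
  have h2 : Tendsto (fun m : ℕ => 1 - 1 / ((m : ℝ) + 1)) atTop (𝓝 (1 - 0)) :=
    tendsto_const_nhds.sub tendsto_one_div_add_atTop_nhds_zero_nat
  rw [sub_zero] at h2
  exact le_of_tendsto' h2 h1

lemma one_div_mono {m m' : ℕ} (h : m ≤ m') : 1 - 1 / ((m : ℝ) + 1) ≤ 1 - 1 / ((m' : ℝ) + 1) := by
  have : (m : ℝ) ≤ m' := by exact_mod_cast h
  gcongr

/-- Step (b). -/
lemma exists_ext {S : CSig} {T : CTheory S} {M : CStructure S}
    (hM : ∀ c ∈ Pi2Cons T, M.sval c.1 < c.2) :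
    ∃ N : CStructure S, N.SatT T ∧ ∃ f : M.Carrier → N.Carrier, OneClosed M N f := by
  let P : QFm S (M.Carrier ⊕ ℕ) → Prop := fun χ =>
    ∀ c : ℕ → M.Carrier, 1 ≤ χ.ev M (Sum.elim id c)
  obtain ⟨U, hU⟩ := QFm.exists_ultra P
    ⟨.neg (.dst (.inr 0) (.inr 0)), fun c => by simp [QFm.ev]⟩
    (fun χ ψ h1 h2 c => le_min (h1 c) (h2 c))
  have hs : ∀ p : {χ // P χ} × ℕ, ∃ N : CStructure S, N.SatT T ∧ ∃ b : M.Carrier → N.Carrier,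
      ∀ c : ℕ → N.Carrier, 1 - 1 / ((p.2 : ℝ) + 1) ≤ p.1.1.ev N (Sum.elim b c) := fun p =>
    finsat hM p.1.1 p.1.2 _ (by positivity) (by
      rw [div_le_one (by positivity)]
      linarith [Nat.cast_nonneg (α := ℝ) p.2])
  choose N hN b hb using hs
  refine ⟨Ult U N, sat_ult U N hN, fun m => umk U N fun p => b p m, ?_⟩
  intro χ hχ c
  choose c' hc' using fun i => umk_surj U N (c i)
  have hl := QFm.los U N χ (Sum.elim (fun m p => b p m) c')
  have e : (fun x => umk U N (Sum.elim (fun m p => b p m) c' x))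
      = Sum.elim (fun m => umk U N fun p => b p m) c := by
    funext x
    rcases x with m | i
    · rfl
    · exact hc' i
  rw [e] at hl
  refine ge_one_of_tendsto hl fun m => (hU (⟨χ, hχ⟩, m)).mono fun p hp => ?_
  refine (one_div_mono hp.1).trans (le_trans ?_ (hp.2 (N p) _))
  refine (hb p (fun i => c' i p)).trans (le_of_eq ?_)
  congr 1
  funext x
  rcases x with m | i <;> rfl

lemma OneClosed.general {S : CSig} {M N : CStructure S} {f : M.Carrier → N.Carrier}
    (hf : OneClosed M N f) {W : Type} [Nonempty W] (χ : QFm S (M.Carrier ⊕ W))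
    (h : ∀ c : W → M.Carrier, 1 ≤ χ.ev M (Sum.elim id c)) (c : W → N.Carrier) :
    1 ≤ χ.ev N (Sum.elim f c) := by
  obtain ⟨F, hF⟩ := χ.supp
  obtain ⟨n, ρ, σ, h₁⟩ := exists_finite_code (F.preimage Sum.inr Sum.inr_injective.injOn)
  let τ : ℕ → W := fun i => if h : i < n then σ ⟨i, h⟩ else Classical.arbitrary W
  have := hf (χ.relabel (Sum.map id fun w => (ρ w : ℕ))) (fun c' => by
    rw [QFm.ev_relabel]
    refine (h fun w => c' (ρ w)).trans (le_of_eq ?_)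
    congr 1
    funext x
    rcases x with m | i <;> rfl) (fun i => c (τ i))
  rw [QFm.ev_relabel] at this
  refine this.trans (le_of_eq (hF _ _ _ ?_))
  rintro (m | w) hx
  · rfl
  · simp [τ, h₁ w (by simpa using hx)]

/-- Embedding from preservation of quantifier-free conditions. -/
def embOf {S : CSig} {M N : CStructure S} (f : M.Carrier → N.Carrier)
    (h : ∀ χ : QFm S M.Carrier, χ.ev M id = χ.ev N f) : CEmbedding M N where
  toFun := f
  isometry x y := (h (.dst x y)).symm
  map_rel i v := (h (.rel i v)).symm

lemma OneClosed.pres {S : CSig} {M N : CStructure S} {f : M.Carrier → N.Carrier}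
    (hf : OneClosed M N f) (χ : QFm S M.Carrier) : χ.ev M id = χ.ev N f := by
  refine QFm.transfer _ _ (fun χ h => ?_) χ
  obtain ⟨d⟩ := N.nonempty
  have := hf (χ.relabel Sum.inl) (fun c => by rw [QFm.ev_relabel]; exact h) (fun _ => d)
  rw [QFm.ev_relabel] at this
  exact this

lemma los_const {S : CSig} {I : Type} (U : Ultrafilter I) (M : CStructure S) (n : ℕ)
    (φ : CFormula S n) (v : Fin n → M.Carrier) :
    (Ult U fun _ => M).eval n φ (fun j => umk U (fun _ => M) fun _ => v j) = M.eval n φ v :=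
  tendsto_nhds_unique (los U (fun _ => M) n φ fun j _ => v j) tendsto_const_nhds

/-- Step (c). -/
lemma exists_back {S : CSig} {M N : CStructure S} {f : M.Carrier → N.Carrier}
    (hf : OneClosed M N f) :
    ∃ (M' : CStructure S) (d : M.Carrier → M'.Carrier) (g : N.Carrier → M'.Carrier),
      (∀ n (φ : CFormula S n) v, M'.eval n φ (fun j => d (v j)) = M.eval n φ v) ∧
      (∀ χ : QFm S N.Carrier, χ.ev N id = χ.ev M' g) ∧ ∀ m, g (f m) = d m := by
  let P : QFm S (M.Carrier ⊕ N.Carrier) → Prop := fun χ => 1 ≤ χ.ev N (Sum.elim f id)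
  obtain ⟨y₀⟩ := N.nonempty
  obtain ⟨U, hU⟩ := QFm.exists_ultra P
    ⟨.neg (.dst (.inr y₀) (.inr y₀)), by simp [P, QFm.ev]⟩
    (fun χ ψ h1 h2 => le_min h1 h2)
  have hs : ∀ p : {χ // P χ} × ℕ, ∃ b : N.Carrier → M.Carrier,
      1 - 1 / ((p.2 : ℝ) + 1) ≤ p.1.1.ev M (Sum.elim id b) := by
    intro p
    by_contra hcon
    push Not at hcon
    have hpos : (0 : ℝ) < 1 / ((p.2 : ℝ) + 1) := by positivity
    have hle : 1 / ((p.2 : ℝ) + 1) ≤ 1 := by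
      rw [div_le_one (by positivity)]
      linarith [Nat.cast_nonneg (α := ℝ) p.2]
    have hc : clampQ (1 - 1 / ((p.2 : ℚ) + 1)) = 1 - 1 / ((p.2 : ℝ) + 1) := by
      unfold clampQ
      push_cast
      rw [min_eq_right (by linarith), max_eq_right (by linarith)]
    have := hf.general (.addc (1 - 1 / ((p.2 : ℚ) + 1)) (.neg p.1.1)) (fun c => by
      simp only [QFm.ev, hc]
      exact le_min le_rfl (by linarith [hcon c])) id
    simp only [QFm.ev, hc] at this
    have h1 := p.1.2
    simp only [P] at h1
    linarith [(le_min_iff.1 this).2]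
  choose b hb using hs
  let M' := Ult U fun _ => M
  let d : M.Carrier → M'.Carrier := fun m => umk U (fun _ => M) fun _ => m
  let g : N.Carrier → M'.Carrier := fun y => umk U (fun _ => M) fun p => b p y
  have key : ∀ χ : QFm S (M.Carrier ⊕ N.Carrier),
      χ.ev N (Sum.elim f id) = χ.ev M' (Sum.elim d g) := by
    refine QFm.transfer _ _ fun χ hχ => ?_
    have hl := QFm.los U (fun _ => M) χ (Sum.elim (fun m _ => m) (fun y p => b p y))
    have e : (fun x => umk U (fun _ => M) (Sum.elim (fun m _ => m) (fun y p => b p y) x))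
        = Sum.elim d g := by
      funext x
      rcases x with m | i <;> rfl
    rw [e] at hl
    refine ge_one_of_tendsto hl fun m => (hU (⟨χ, hχ⟩, m)).mono fun p hp => ?_
    refine (one_div_mono hp.1).trans (le_trans ?_ (hp.2 M _))
    refine (hb p).trans (le_of_eq ?_)
    congr 1
    funext x
    rcases x with m | i <;> rfl
  refine ⟨M', d, g, fun n φ v => los_const U M n φ v, fun χ => ?_, fun m => ?_⟩
  · have := key (χ.relabel Sum.inr)
    rw [QFm.ev_relabel, QFm.ev_relabel] at this
    exact this
  · have := key (.dst (.inr (f m)) (.inl m))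
    simp only [QFm.ev, Sum.elim_inl, Sum.elim_inr, id, dist_self] at this
    exact dist_eq_zero.1 this.symm

lemma snoc_comp' {A B : Type} (f : A → B) {n : ℕ} (v : Fin n → A) (x : A) :
    (Fin.snoc (fun j => f (v j)) (f x) : Fin (n+1) → B)
      = fun j => f ((Fin.snoc v x : Fin (n+1) → A) j) := by
  funext j
  refine Fin.lastCases ?_ (fun j => ?_) j <;> simp

/-- Step (d). -/
theorem main_induction {S : CSig} {T : CTheory S} (hmc : IsModelComplete T) :
    ∀ (n : ℕ) (φ : CFormula S n) (M N : CStructure S) (f : M.Carrier → N.Carrier),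
      (∀ c ∈ Pi2Cons T, M.sval c.1 < c.2) → N.SatT T → OneClosed M N f →
      ∀ v : Fin n → M.Carrier, N.eval n φ (fun j => f (v j)) = M.eval n φ v := by
  -- For any point of `N` there is a suitable extension of `M`.
  have aux : ∀ (n : ℕ) (φ : CFormula S (n+1)),
      (∀ (M N : CStructure S) (f : M.Carrier → N.Carrier),
      (∀ c ∈ Pi2Cons T, M.sval c.1 < c.2) → N.SatT T → OneClosed M N f →
      ∀ v : Fin (n+1) → M.Carrier, N.eval (n+1) φ (fun j => f (v j)) = M.eval (n+1) φ v) →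
      ∀ (M N : CStructure S) (f : M.Carrier → N.Carrier),
      (∀ c ∈ Pi2Cons T, M.sval c.1 < c.2) → N.SatT T → OneClosed M N f →
      ∃ (M' : CStructure S) (d : M.Carrier → M'.Carrier) (g : N.Carrier → M'.Carrier),
      (∀ n (φ : CFormula S n) v, M'.eval n φ (fun j => d (v j)) = M.eval n φ v) ∧
      ∀ (v : Fin n → M.Carrier) (y : N.Carrier),
        N.eval (n+1) φ (Fin.snoc (fun j => f (v j)) y)
          = M'.eval (n+1) φ (Fin.snoc (fun j => d (v j)) (g y)) := by
    intro n φ ih M N f hM hN hf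
    obtain ⟨M', d, g, hd, hg, hgf⟩ := exists_back hf
    have hM' : ∀ c ∈ Pi2Cons T, M'.sval c.1 < c.2 := by
      intro c hc
      have h1 := hd 0 c.1 (fun i => i.elim0)
      have e : (fun j : Fin 0 => d ((fun i : Fin 0 => i.elim0) j)) = fun i => i.elim0 :=
        funext fun i => i.elim0
      rw [e] at h1
      exact lt_of_le_of_lt h1.le (hM c hc)
    obtain ⟨N', hN', f', hf'⟩ := exists_ext hM'
    refine ⟨M', d, g, hd, fun v y => ?_⟩
    have h1 := ih M' N' f' hM' hN' hf' (fun j => g ((Fin.snoc (fun j => f (v j)) y : Fin (n+1) → N.Carrier) j))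
    let E : CEmbedding N N' := embOf (fun y => f' (g y)) (fun χ => by
      rw [hg χ]
      have := hf'.pres (χ.relabel g)
      rw [QFm.ev_relabel, QFm.ev_relabel] at this
      exact this)
    have h2 := hmc N N' hN hN' E (n+1) φ (Fin.snoc (fun j => f (v j)) y)
    have h3 : N'.eval (n+1) φ (E.toFun ∘ (Fin.snoc (fun j => f (v j)) y : Fin (n+1) → N.Carrier))
      = M'.eval (n+1) φ (fun j => g ((Fin.snoc (fun j => f (v j)) y : Fin (n+1) → N.Carrier) j)) := h1
    rw [← h2, h3, ← snoc_comp']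
    simp only [hgf]
  intro n φ
  induction φ with
  | dst a b => intro M N f hM hN hf v; exact (embOf f hf.pres).isometry _ _
  | rel i ts => intro M N f hM hN hf v; exact (embOf f hf.pres).map_rel i fun j => v (ts j)
  | const q => intro M N f hM hN hf v; rfl
  | fmin φ ψ h1 h2 =>
    intro M N f hM hN hf v; simp only [CStructure.eval, h1 M N f hM hN hf, h2 M N f hM hN hf]
  | fmax φ ψ h1 h2 =>
    intro M N f hM hN hf v; simp only [CStructure.eval, h1 M N f hM hN hf, h2 M N f hM hN hf]
  | neg φ h1 =>
    intro M N f hM hN hf v; simp only [CStructure.eval, h1 M N f hM hN hf]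
  | addT φ ψ h1 h2 =>
    intro M N f hM hN hf v; simp only [CStructure.eval, h1 M N f hM hN hf, h2 M N f hM hN hf]
  | subT φ ψ h1 h2 =>
    intro M N f hM hN hf v; simp only [CStructure.eval, h1 M N f hM hN hf, h2 M N f hM hN hf]
  | absd φ ψ h1 h2 =>
    intro M N f hM hN hf v; simp only [CStructure.eval, h1 M N f hM hN hf, h2 M N f hM hN hf]
  | scale q φ h1 =>
    intro M N f hM hN hf v; simp only [CStructure.eval, h1 M N f hM hN hf]
  | @inf n φ ih =>
    intro M N f hM hN hf v
    obtain ⟨M', d, g, hd, h⟩ := aux n φ ih M N f hM hN hf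
    apply le_antisymm
    · conv_rhs => simp only [CStructure.eval]
      refine le_ciInf fun x => ?_
      rw [← ih M N f hM hN hf, ← snoc_comp']
      exact eval_inf_le _ _ _ _
    · rw [← hd n (.inf φ) v]
      conv_rhs => simp only [CStructure.eval]
      refine le_ciInf fun y => ?_
      rw [h]
      exact eval_inf_le _ _ _ _
  | @sup n φ ih =>
    intro M N f hM hN hf v
    obtain ⟨M', d, g, hd, h⟩ := aux n φ ih M N f hM hN hf
    apply le_antisymm
    · rw [← hd n (.sup φ) v]
      conv_lhs => simp only [CStructure.eval]
      refine ciSup_le fun y => ?_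
      rw [h]
      exact le_eval_sup _ _ _ _
    · conv_lhs => simp only [CStructure.eval]
      refine ciSup_le fun x => ?_
      rw [← ih M N f hM hN hf, ← snoc_comp']
      exact le_eval_sup _ _ _ _

/-- If a continuous first-order theory `T` is model complete (every
embedding between models of `T` is elementary), then `T` is inductive. -/
theorem inductive_of_modelComplete (S : CSig) (T : CTheory S) (hT : IsTheory T)
    (hmc : IsModelComplete T) : IsInductiveTheory T := by
  refine ⟨Pi2Cons T, fun c hc => hc.1, fun M => ⟨fun hM c hc => hc.2 M hM, fun hM => ?_⟩⟩
  obtain ⟨N, hN, f, hf⟩ := exists_ext hM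
  intro c hc
  have h := main_induction hmc 0 c.1 M N f hM hN hf (fun i => i.elim0)
  have e : (fun j : Fin 0 => f ((fun i : Fin 0 => i.elim0) j)) = fun i => i.elim0 :=
    funext fun i => i.elim0
  rw [e] at h
  exact le_trans h.ge (hN c hc)
end
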